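/- arXiv:2308.00679 — 9 statements merged into one kernel-verified Lean document; each statement's English description precedes it below -/
import Mathlib

section
/- Let k ≥ 1 be an integer, let f : ℝ → ℝ be k-times continuously differentiable on [a, b] with a < b, and suppose f^{(k)} is monotonically increasing on [a, b]. Then for every x₀ ∈ (a, b), the function x ↦ R_{k-1}(x; f, x₀)/(x - x₀)^k (extended at x = x₀ by its limit f^{(k)}(x₀)/k!) is monotonically increasing on [a, b]. -/
/-!
The Taylor remainder in integral form, with the substitution `t = x₀ + (x - x₀) s`, gives
`R_n(x; f, x₀) / (x - x₀)^(n+1) = ∫ s in 0..1, (1 - s)^n / n! * f⁽ⁿ⁺¹⁾(x₀ + (x - x₀) s)`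
(`taylorRemainder_eq_integral`). The right-hand side also has the prescribed value
`f⁽ⁿ⁺¹⁾(x₀) / (n+1)!` at `x = x₀`, and its integrand is increasing in `x` for each `s ∈ (0, 1)`,
because the weight is nonnegative and `f⁽ⁿ⁺¹⁾` is increasing.

The integrand uses `iteratedDerivWithin` on `[a, b]`, which is continuous on the closed interval;
it agrees with `iteratedDeriv` on `(a, b)`, and the arguments `x₀ + (x - x₀) s` with `0 ≤ s < 1`
all lie there since `x₀` is an interior point.
-/

/-- Degree `k-1` Taylor remainder: `R_{k-1}(x; f, x₀) = f x - ∑_{i=0}^{k-1} f⁽ⁱ⁾(x₀)(x-x₀)^i/i!`. -/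
noncomputable def taylorRemainder (f : ℝ → ℝ) (x₀ : ℝ) (k : ℕ) (x : ℝ) : ℝ :=
  f x - ∑ i ∈ Finset.range k, iteratedDeriv i f x₀ * (x - x₀) ^ i / (i.factorial : ℝ)

open Set in
/-- At an interior point of `s`, the iterated derivative within `s` is the two-sided one. -/
lemma iteratedDerivWithin_eq_of_mem_nhds {f : ℝ → ℝ} {s : Set ℝ} {m : ℕ} {x : ℝ}
    (hs : s ∈ nhds x) : iteratedDerivWithin m f s x = iteratedDeriv m f x := by
  rw [iteratedDerivWithin, iteratedDeriv, ← iteratedFDerivWithin_univ]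
  congr 1
  apply iteratedFDerivWithin_congr_set
  filter_upwards [eventually_mem_nhds_iff.2 hs] with y hy
  exact eq_true (mem_of_mem_nhds hy) |>.trans (eq_true (mem_univ y)).symm

lemma segment_mem_Icc {a b x₀ x s : ℝ} (hx₀ : x₀ ∈ Set.Ioo a b) (hx : x ∈ Set.Icc a b)
    (hs : s ∈ Set.Icc (0 : ℝ) 1) : x₀ + (x - x₀) * s ∈ Set.Icc a b := by
  obtain ⟨h1, h2⟩ := hx₀
  obtain ⟨h3, h4⟩ := hx
  obtain ⟨h5, h6⟩ := hs
  constructor <;> nlinarith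

lemma segment_mem_Ioo {a b x₀ x s : ℝ} (hx₀ : x₀ ∈ Set.Ioo a b) (hx : x ∈ Set.Icc a b)
    (hs : s ∈ Set.Ioo (0 : ℝ) 1) : x₀ + (x - x₀) * s ∈ Set.Ioo a b := by
  obtain ⟨h1, h2⟩ := hx₀
  obtain ⟨h3, h4⟩ := hx
  obtain ⟨h5, h6⟩ := hs
  constructor <;> nlinarith

open Set in
lemma taylorRemainder_eq_integral {n : ℕ} {f : ℝ → ℝ} {a b x₀ x : ℝ}
    (hf : ContDiffOn ℝ (n + 1 : ℕ) f (Icc a b)) (hx₀ : x₀ ∈ Ioo a b) (hx : x ∈ Icc a b)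
    (hne : x ≠ x₀) :
    taylorRemainder f x₀ (n + 1) x / (x - x₀) ^ (n + 1) =
      ∫ s in (0 : ℝ)..1, (1 - s) ^ n / (n.factorial : ℝ) *
        iteratedDerivWithin (n + 1) f (Icc a b) (x₀ + (x - x₀) * s) := by
  have hsub : uIcc x₀ x ⊆ Icc a b := uIcc_subset_Icc (Ioo_subset_Icc_self hx₀) hx
  have hd : x - x₀ ≠ 0 := sub_ne_zero.2 hne
  have hR : taylorRemainder f x₀ (n + 1) x = f x - taylorWithinEval f n (uIcc x₀ x) x₀ x := by
    rw [taylorRemainder, taylor_within_apply]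
    congr 1
    refine Finset.sum_congr rfl fun i hi => ?_
    -- `x₀` is an endpoint of `uIcc x₀ x`, but `f` is `C^i` in a neighbourhood of it.
    have hc : ContDiffAt ℝ i f x₀ :=
      (hf.contDiffAt (Icc_mem_nhds hx₀.1 hx₀.2)).of_le
        (by exact_mod_cast (Finset.mem_range.1 hi).le)
    rw [iteratedDerivWithin_eq_iteratedDeriv (uniqueDiffOn_uIcc hne.symm) hc left_mem_uIcc,
      smul_eq_mul]
    ring
  have hsubst := intervalIntegral.mul_integral_comp_add_mul (a := 0) (b := 1)
    (f := fun t => ((x - t) ^ n / (n.factorial : ℝ)) •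
      iteratedDerivWithin (n + 1) f (uIcc x₀ x) t) (c := x - x₀) (d := x₀)
  rw [mul_zero, add_zero, mul_one, add_sub_cancel] at hsubst
  rw [hR, taylor_integral_remainder (hf.mono hsub), ← hsubst, div_eq_iff (pow_ne_zero _ hd),
    pow_succ, ← mul_assoc, mul_comm]
  congr 1
  rw [← intervalIntegral.integral_mul_const]
  apply intervalIntegral.integral_congr_Ioo_of_le zero_le_one
  intro s hs
  have hmem : uIcc x₀ x ∈ nhds (x₀ + (x - x₀) * s) := by
    obtain ⟨h0, h1⟩ := hs
    rcases lt_or_gt_of_ne hne with h | h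
    · rw [uIcc_of_ge h.le]; apply Icc_mem_nhds <;> nlinarith
    · rw [uIcc_of_le h.le]; apply Icc_mem_nhds <;> nlinarith
  have e : x - (x₀ + (x - x₀) * s) = (x - x₀) * (1 - s) := by ring
  simp only [smul_eq_mul]
  rw [iteratedDerivWithin_eq_of_mem_nhds hmem,
    iteratedDerivWithin_eq_of_mem_nhds (Filter.mem_of_superset hmem hsub), e, mul_pow]
  ring

/-- The total mass of the kernel of the integral remainder. -/
lemma integral_taylor_kernel (n : ℕ) :
    ∫ s in (0 : ℝ)..1, (1 - s) ^ n / (n.factorial : ℝ) = 1 / ((n + 1).factorial : ℝ) := by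
  rw [intervalIntegral.integral_div,
    intervalIntegral.integral_comp_sub_left (fun s : ℝ => s ^ n) 1, Nat.factorial_succ]
  have : (n.factorial : ℝ) ≠ 0 := by positivity
  simp
  field_simp

/-- if `f` is `C^k` on `[a,b]` and `f⁽ᵏ⁾` is monotonically increasing on `[a,b]`,
then for `x₀ ∈ (a,b)`, the ratio `x ↦ R_{k-1}(x; f, x₀)/(x-x₀)^k` (extended at `x₀` by
`f⁽ᵏ⁾(x₀)/k!`) is monotonically increasing on `[a,b]`. -/
theorem remainder_ratio_monotone (k : ℕ) (hk : 1 ≤ k) (f : ℝ → ℝ) (a b : ℝ) (hab : a < b)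
    (hf : ContDiffOn ℝ (k : ℕ∞) f (Set.Icc a b))
    (hmono : MonotoneOn (iteratedDeriv k f) (Set.Icc a b)) :
    ∀ x₀ ∈ Set.Ioo a b,
      MonotoneOn
        (fun x => if x = x₀ then iteratedDeriv k f x₀ / (k.factorial : ℝ)
          else taylorRemainder f x₀ k x / (x - x₀) ^ k)
        (Set.Icc a b) := by
  intro x₀ hx₀
  obtain ⟨n, rfl⟩ : ∃ n, k = n + 1 := ⟨k - 1, by omega⟩
  have hf' : ContDiffOn ℝ (n + 1 : ℕ) f (Set.Icc a b) := hf
  set g := iteratedDerivWithin (n + 1) f (Set.Icc a b) with hg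
  have hgc : ContinuousOn g (Set.Icc a b) :=
    hf'.continuousOn_iteratedDerivWithin le_rfl (uniqueDiffOn_Icc hab)
  have hgeq : ∀ t ∈ Set.Ioo a b, g t = iteratedDeriv (n + 1) f t := fun t ht =>
    iteratedDerivWithin_eq_of_mem_nhds (Icc_mem_nhds ht.1 ht.2)
  have hrep : ∀ x ∈ Set.Icc a b,
      (if x = x₀ then iteratedDeriv (n + 1) f x₀ / ((n + 1).factorial : ℝ)
        else taylorRemainder f x₀ (n + 1) x / (x - x₀) ^ (n + 1)) =
      ∫ s in (0 : ℝ)..1, (1 - s) ^ n / (n.factorial : ℝ) * g (x₀ + (x - x₀) * s) := by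
    intro x hx
    split_ifs with h
    · simp only [h, sub_self, zero_mul, add_zero]
      rw [intervalIntegral.integral_mul_const, integral_taylor_kernel, hgeq x₀ hx₀]
      ring
    · exact taylorRemainder_eq_integral hf' hx₀ hx h
  have hint : ∀ x ∈ Set.Icc a b, IntervalIntegrable
      (fun s => (1 - s) ^ n / (n.factorial : ℝ) * g (x₀ + (x - x₀) * s))
      MeasureTheory.volume 0 1 := by
    intro x hx
    apply ContinuousOn.intervalIntegrable
    rw [Set.uIcc_of_le zero_le_one]
    refine ContinuousOn.mul (by fun_prop) (hgc.comp (by fun_prop) ?_)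
    exact fun s hs => segment_mem_Icc hx₀ hx hs
  intro x hx y hy hxy
  simp only
  rw [hrep x hx, hrep y hy]
  refine intervalIntegral.integral_mono_on_of_le_Ioo zero_le_one (hint x hx) (hint y hy) ?_
  intro s hs
  have hsx := segment_mem_Ioo hx₀ hx hs
  have hsy := segment_mem_Ioo hx₀ hy hs
  rw [hgeq _ hsx, hgeq _ hsy]
  have h0 := hs.1
  have h1 : 0 ≤ 1 - s := sub_nonneg.2 hs.2.le
  refine mul_le_mul_of_nonneg_left ?_ (by positivity)
  exact hmono (Set.Ioo_subset_Icc_self hsx) (Set.Ioo_subset_Icc_self hsy) (by gcongr)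
end

section
/- Let k ≥ 1 be an integer, let f : ℝ → ℝ be k-times continuously differentiable on [a, b] with a < b, let x₀ ∈ (a, b), and suppose f^{(k)} is monotonically decreasing on [a, b]. Then for every x ∈ [a, b] with x ≠ x₀, R_{k-1}(b; f, x₀)/(b - x₀)^k ≤ R_{k-1}(x; f, x₀)/(x - x₀)^k ≤ R_{k-1}(a; f, x₀)/(a - x₀)^k. Consequently the infimum of R_{k-1}(x; f, x₀)/(x - x₀)^k over x ∈ [a, b] \ {x₀} equals R_{k-1}(b; f, x₀)/(b - x₀)^k, and the supremum equals R_{k-1}(a; f, x₀)/(a - x₀)^k. -/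
open Set

/-- For `f` restricted to the segment `[[x₀, x]]`, the derivatives within the segment
agree with the two-sided ones at its points other than `a` and `b`. -/
theorem iteratedDerivWithin_uIcc_eq {n : ℕ} {f : ℝ → ℝ} {a b x₀ x t : ℝ}
    (hf : ContDiffOn ℝ (n : ℕ∞) f (Icc a b)) (hne : x ≠ x₀) {i : ℕ} (hi : i ≤ n)
    (ht : t ∈ Ioo a b) (ht' : t ∈ uIcc x₀ x) :
    iteratedDerivWithin i f (uIcc x₀ x) t = iteratedDeriv i f t := by
  have h : ContDiffAt ℝ (n : ℕ∞) f t := hf.contDiffAt (Icc_mem_nhds ht.1 ht.2)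
  exact iteratedDerivWithin_eq_iteratedDeriv (uniqueDiffOn_uIcc hne.symm)
    (h.of_le (by exact_mod_cast hi)) ht'

/-- The normalized remainder is a weighted average of the top derivative over the segment from
`x₀` to `x`, with weights not depending on `x`. -/
theorem taylorRemainder_div_eq_integral {n : ℕ} {f : ℝ → ℝ} {a b x₀ x : ℝ}
    (hx₀ : x₀ ∈ Ioo a b) (hf : ContDiffOn ℝ ((n + 1 : ℕ) : ℕ∞) f (Icc a b))
    (hx : x ∈ Icc a b) (hne : x ≠ x₀) :
    taylorRemainder f x₀ (n + 1) x / (x - x₀) ^ (n + 1) =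
      ∫ s in (0 : ℝ)..1, (1 - s) ^ n / (n.factorial : ℝ) *
        iteratedDeriv (n + 1) f (x₀ + (x - x₀) * s) := by
  have hsub : uIcc x₀ x ⊆ Icc a b := uIcc_subset_Icc (Ioo_subset_Icc_self hx₀) hx
  have hd : x - x₀ ≠ 0 := sub_ne_zero.2 hne
  have hT := taylor_integral_remainder (f := f) (x := x) (x₀ := x₀) (n := n)
    ((hf.mono hsub).of_le (by norm_cast))
  have hL : f x - taylorWithinEval f n (uIcc x₀ x) x₀ x = taylorRemainder f x₀ (n + 1) x := by
    rw [taylor_within_apply, taylorRemainder]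
    congr 1
    refine Finset.sum_congr rfl fun i hi => ?_
    rw [iteratedDerivWithin_uIcc_eq hf hne (Finset.mem_range.1 hi).le hx₀ left_mem_uIcc, smul_eq_mul]
    ring
  have hR : (∫ t in x₀..x, ((x - t) ^ n / (n.factorial : ℝ)) •
        iteratedDerivWithin (n + 1) f (uIcc x₀ x) t) =
      ∫ t in x₀..x, ((x - t) ^ n / (n.factorial : ℝ)) * iteratedDeriv (n + 1) f t := by
    refine intervalIntegral.integral_congr_uIoo fun t ht => ?_
    have ht1 : t ∈ Ioo a b :=
      ⟨(le_min hx₀.1.le hx.1).trans_lt ht.1, ht.2.trans_le (max_le hx₀.2.le hx.2)⟩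
    simp only [smul_eq_mul]
    rw [iteratedDerivWithin_uIcc_eq hf hne le_rfl ht1 ⟨ht.1.le, ht.2.le⟩]
  have hS := intervalIntegral.smul_integral_comp_add_mul (a := 0) (b := 1)
    (fun t => ((x - t) ^ n / (n.factorial : ℝ)) * iteratedDeriv (n + 1) f t) (x - x₀) x₀
  rw [mul_zero, add_zero, mul_one, add_sub_cancel, smul_eq_mul] at hS
  rw [← hL, hT, hR, ← hS, div_eq_iff (pow_ne_zero _ hd), pow_succ', mul_comm (∫ _ in _.._, _),
    mul_assoc, ← intervalIntegral.integral_const_mul ((x - x₀) ^ n)]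
  congr 1
  refine intervalIntegral.integral_congr fun s _ => ?_
  have : x - (x₀ + (x - x₀) * s) = (x - x₀) * (1 - s) := by ring
  simp only [this, mul_pow]
  ring

/-- The integrand of `taylorRemainder_div_eq_integral`, with `F` for `f⁽ⁿ⁺¹⁾`, is integrable: `F` is monotone
or antitone in `s` along the segment, according to the sign of `x - x₀`. -/
theorem intervalIntegrable_remainder_integrand {n : ℕ} {F : ℝ → ℝ} {a b x₀ x : ℝ}
    (hx₀ : x₀ ∈ Icc a b) (hx : x ∈ Icc a b) (hF : AntitoneOn F (Icc a b)) :
    IntervalIntegrable (fun s : ℝ => (1 - s) ^ n / (n.factorial : ℝ) * F (x₀ + (x - x₀) * s))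
      MeasureTheory.volume 0 1 := by
  refine IntervalIntegrable.continuousOn_mul ?_ (by fun_prop)
  have hmem : ∀ s ∈ uIcc (0 : ℝ) 1, x₀ + (x - x₀) * s ∈ Icc a b := fun s hs => by
    rw [uIcc_of_le zero_le_one] at hs
    simpa [mul_comm] using (convex_Icc a b).add_smul_sub_mem hx₀ hx hs
  rcases le_total x₀ x with h | h
  · refine AntitoneOn.intervalIntegrable fun s hs t ht hst => hF (hmem s hs) (hmem t ht) ?_
    nlinarith
  · refine MonotoneOn.intervalIntegrable fun s hs t ht hst => hF (hmem t ht) (hmem s hs) ?_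
    nlinarith

theorem taylorRemainder_div_antitone {n : ℕ} {f : ℝ → ℝ} {a b x₀ : ℝ}
    (hx₀ : x₀ ∈ Ioo a b) (hf : ContDiffOn ℝ ((n + 1 : ℕ) : ℕ∞) f (Icc a b))
    (hmono : AntitoneOn (iteratedDeriv (n + 1) f) (Icc a b)) :
    AntitoneOn (fun x => taylorRemainder f x₀ (n + 1) x / (x - x₀) ^ (n + 1))
      (Icc a b \ {x₀}) := by
  rintro x ⟨hx, hxne⟩ y ⟨hy, hyne⟩ hxy
  have h₀ := Ioo_subset_Icc_self hx₀
  simp only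
  rw [taylorRemainder_div_eq_integral hx₀ hf hx hxne, taylorRemainder_div_eq_integral hx₀ hf hy hyne]
  refine intervalIntegral.integral_mono_on zero_le_one
    (intervalIntegrable_remainder_integrand h₀ hy hmono)
    (intervalIntegrable_remainder_integrand h₀ hx hmono) fun s hs => ?_
  have hmem : ∀ z ∈ Icc a b, x₀ + (z - x₀) * s ∈ Icc a b := fun z hz => by
    simpa [mul_comm] using (convex_Icc a b).add_smul_sub_mem h₀ hz hs
  have h1 : 0 ≤ 1 - s := sub_nonneg.2 hs.2
  refine mul_le_mul_of_nonneg_left (hmono (hmem x hx) (hmem y hy) ?_) (by positivity)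
  nlinarith [mul_le_mul_of_nonneg_right hxy hs.1]

/-- if `f` is `C^k` on `[a,b]` and `f⁽ᵏ⁾` is monotonically decreasing on `[a,b]`,
then for `x₀ ∈ (a,b)` the ratio `R_{k-1}(x; f, x₀)/(x-x₀)^k` is bounded below by its value at `b`
and above by its value at `a`, so the sharp degree-`k` Taylor polynomial enclosure of `f` at `x₀`
over `[a,b]` is `[R_{k-1}(b)/(b-x₀)^k, R_{k-1}(a)/(a-x₀)^k]`. -/
theorem sharp_enclosure_of_antitone (k : ℕ) (hk : 1 ≤ k) (f : ℝ → ℝ) (a b x₀ : ℝ) (hab : a < b)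
    (hx₀ : x₀ ∈ Set.Ioo a b)
    (hf : ContDiffOn ℝ (k : ℕ∞) f (Set.Icc a b))
    (hmono : AntitoneOn (iteratedDeriv k f) (Set.Icc a b)) :
    (∀ x ∈ Set.Icc a b, x ≠ x₀ →
        taylorRemainder f x₀ k b / (b - x₀) ^ k ≤ taylorRemainder f x₀ k x / (x - x₀) ^ k ∧
        taylorRemainder f x₀ k x / (x - x₀) ^ k ≤ taylorRemainder f x₀ k a / (a - x₀) ^ k) ∧
    sInf ((fun x => taylorRemainder f x₀ k x / (x - x₀) ^ k) '' (Set.Icc a b \ {x₀})) =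
      taylorRemainder f x₀ k b / (b - x₀) ^ k ∧
    sSup ((fun x => taylorRemainder f x₀ k x / (x - x₀) ^ k) '' (Set.Icc a b \ {x₀})) =
      taylorRemainder f x₀ k a / (a - x₀) ^ k := by
  obtain ⟨n, rfl⟩ : ∃ n, k = n + 1 := ⟨k - 1, by omega⟩
  have hA := taylorRemainder_div_antitone hx₀ hf hmono
  have ha : a ∈ Set.Icc a b \ {x₀} := ⟨Set.left_mem_Icc.2 hab.le, hx₀.1.ne⟩
  have hb : b ∈ Set.Icc a b \ {x₀} := ⟨Set.right_mem_Icc.2 hab.le, hx₀.2.ne'⟩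
  refine ⟨fun x hx hne => ⟨hA ⟨hx, hne⟩ hb hx.2, hA ha ⟨hx, hne⟩ hx.1⟩, ?_, ?_⟩
  · refine IsLeast.csInf_eq ⟨Set.mem_image_of_mem _ hb, ?_⟩
    rintro _ ⟨x, hx, rfl⟩
    exact hA hx hb hx.1.2
  · refine IsGreatest.csSup_eq ⟨Set.mem_image_of_mem _ ha, ?_⟩
    rintro _ ⟨x, hx, rfl⟩
    exact hA ha hx hx.1.1
end

section
/- Let α > 0 and [a, b] ⊆ [-α, α] with a < b, let f : ℝ → ℝ be twice continuously differentiable, and suppose f'' is even-symmetric on [-α, α] (f''(x) = f''(-x) for all x ∈ [-α, α]) and strictly decreasing on [0, α]. Then for every x₀ ∈ (a, b) and every x ∈ [a, b] with x ≠ x₀, sign(∫_{t=x₀}^{x} f''(t)·(2t - x - x₀) dt) = -sign(x + x₀)·sign(x - x₀). -/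
/-!
Write `g = f''` and `s = x + x₀`. Both sides of the identity change sign when `x` and `x₀` are
exchanged, so only the ordered case `∫_u^v` with `u < v` matters. The reflection `t ↦ s - t`
preserves `[u, v]` and negates the weight `2t - s`, hence
`2 ∫_u^v g(t) (2t - s) dt = ∫_u^v (g(t) - g(s - t)) (2t - s) dt`.
Since `s (2t - s) = t² - (s - t)²` and `g` is strictly decreasing in `|t|`, the product of `s` with
the last integrand is nonpositive, and it is negative at `t = v` when `s ≠ 0`
(`mul_weighted_integral_neg`). When `s = 0` the last integrand vanishes by evenness
(`weighted_integral_eq_zero`).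
-/

/-- A function that is even on `[-α, α]` and strictly decreasing on `[0, α]` is strictly decreasing
in the absolute value of its argument. -/
lemma lt_of_abs_lt_of_even {α : ℝ} {g : ℝ → ℝ}
    (hsym : ∀ x ∈ Set.Icc (-α) α, g x = g (-x)) (hdec : StrictAntiOn g (Set.Icc 0 α))
    {p q : ℝ} (hp : p ∈ Set.Icc (-α) α) (hq : q ∈ Set.Icc (-α) α) (hpq : |p| < |q|) :
    g q < g p := by
  have habs : ∀ r ∈ Set.Icc (-α) α, g |r| = g r := by
    intro r hr
    rcases abs_choice r with h | h
    · rw [h]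
    · rw [h, ← hsym r hr]
  rw [← habs p hp, ← habs q hq]
  exact hdec ⟨abs_nonneg p, abs_le.2 hp⟩ ⟨abs_nonneg q, abs_le.2 hq⟩ hpq

lemma two_mul_weighted_integral {g : ℝ → ℝ} (hg : Continuous g) (u v : ℝ) :
    2 * ∫ t in u..v, g t * (2 * t - v - u) =
      ∫ t in u..v, (g t - g (u + v - t)) * (2 * t - v - u) := by
  have hrefl : ∫ t in u..v, g (u + v - t) * (2 * (u + v - t) - v - u) =
      ∫ t in u..v, g t * (2 * t - v - u) := by
    rw [intervalIntegral.integral_comp_sub_left (fun t => g t * (2 * t - v - u)) (u + v)]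
    congr 1 <;> ring
  rw [two_mul]
  nth_rewrite 2 [← hrefl]
  rw [← intervalIntegral.integral_add
    (Continuous.intervalIntegrable (by fun_prop) _ _)
    (Continuous.intervalIntegrable (by fun_prop) _ _)]
  congr 1
  ext t
  ring

lemma mul_weighted_integral_neg {α : ℝ} {g : ℝ → ℝ} (hg : Continuous g)
    (hsym : ∀ x ∈ Set.Icc (-α) α, g x = g (-x)) (hdec : StrictAntiOn g (Set.Icc 0 α))
    {u v : ℝ} (hu : u ∈ Set.Icc (-α) α) (hv : v ∈ Set.Icc (-α) α) (huv : u < v)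
    (hs : v + u ≠ 0) :
    (v + u) * ∫ t in u..v, g t * (2 * t - v - u) < 0 := by
  have key : ∀ p ∈ Set.Icc (-α) α, ∀ q ∈ Set.Icc (-α) α, p ^ 2 ≠ q ^ 2 →
      0 < -((g p - g q) * (p ^ 2 - q ^ 2)) := by
    intro p hp q hq hne
    rcases lt_or_gt_of_ne hne with h | h
    · have := lt_of_abs_lt_of_even hsym hdec hp hq (sq_lt_sq.1 h)
      nlinarith [mul_pos (sub_pos.2 this) (sub_pos.2 h)]
    · have := lt_of_abs_lt_of_even hsym hdec hq hp (sq_lt_sq.1 h)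
      nlinarith [mul_pos (sub_pos.2 this) (sub_pos.2 h)]
  have hfac : ∀ t, -(v + u) * ((g t - g (u + v - t)) * (2 * t - v - u)) =
      -((g t - g (u + v - t)) * (t ^ 2 - (u + v - t) ^ 2)) := by
    intro t; ring
  have hpos : 0 < ∫ t in u..v, -(v + u) * ((g t - g (u + v - t)) * (2 * t - v - u)) := by
    refine intervalIntegral.integral_pos huv (Continuous.continuousOn (by fun_prop)) ?_
      ⟨v, ⟨huv.le, le_rfl⟩, ?_⟩
    · intro t ht
      rw [hfac]
      by_cases h : t ^ 2 = (u + v - t) ^ 2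
      · simp [h]
      · exact (key t ⟨by linarith [hu.1, ht.1], by linarith [hv.2, ht.2]⟩ _
          ⟨by linarith [hu.1, ht.2], by linarith [hv.2, ht.1]⟩ h).le
    · rw [hfac, add_sub_cancel_right]
      refine key v hv u hu fun h => ?_
      have : (v + u) * (v - u) = 0 := by linear_combination h
      rcases mul_eq_zero.1 this with h | h
      · exact hs h
      · linarith
  rw [intervalIntegral.integral_const_mul, ← two_mul_weighted_integral hg] at hpos
  linarith

lemma weighted_integral_eq_zero {α : ℝ} {g : ℝ → ℝ} (hg : Continuous g)
    (hsym : ∀ x ∈ Set.Icc (-α) α, g x = g (-x))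
    {u v : ℝ} (hu : u ∈ Set.Icc (-α) α) (hv : v ∈ Set.Icc (-α) α) (hs : v + u = 0) :
    ∫ t in u..v, g t * (2 * t - v - u) = 0 := by
  have h2 := two_mul_weighted_integral hg u v
  have hzero : ∫ t in u..v, (g t - g (u + v - t)) * (2 * t - v - u) = 0 := by
    refine (intervalIntegral.integral_congr (g := fun _ => (0 : ℝ)) fun t ht => ?_).trans (by simp)
    have : g t = g (-t) := hsym t (Set.uIcc_subset_Icc hu hv ht)
    have hst : u + v - t = -t := by linarith
    simp [hst, this]
  linarith

lemma sign_weighted_integral {α : ℝ} {g : ℝ → ℝ} (hg : Continuous g)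
    (hsym : ∀ x ∈ Set.Icc (-α) α, g x = g (-x)) (hdec : StrictAntiOn g (Set.Icc 0 α))
    {u v : ℝ} (hu : u ∈ Set.Icc (-α) α) (hv : v ∈ Set.Icc (-α) α) (huv : u < v) :
    Real.sign (∫ t in u..v, g t * (2 * t - v - u)) = -Real.sign (v + u) := by
  rcases lt_trichotomy (v + u) 0 with h | h | h
  · have hI := mul_weighted_integral_neg hg hsym hdec hu hv huv h.ne
    rw [Real.sign_of_neg h, Real.sign_of_pos (pos_of_mul_neg_right hI h.le), neg_neg]
  · rw [weighted_integral_eq_zero hg hsym hu hv h, h, Real.sign_zero, neg_zero]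
  · have hI := mul_weighted_integral_neg hg hsym hdec hu hv huv h.ne'
    rw [Real.sign_of_pos h, Real.sign_of_neg (neg_of_mul_neg_right hI h.le)]

/-- if `f''` is even-symmetric on `[-α, α] ⊇ [a, b]` and strictly decreasing on
`[0, α]`, then for `x₀ ∈ (a, b)` and `x ∈ [a, b]` with `x ≠ x₀`,
`sign (∫_{x₀}^{x} f''(t) (2t - x - x₀) dt) = -(sign (x + x₀) * sign (x - x₀))`. -/
theorem sign_integral_even_symmetric (α a b : ℝ) (hα : 0 < α)
    (hsub : Set.Icc a b ⊆ Set.Icc (-α) α) (hab : a < b)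
    (f : ℝ → ℝ) (hf : ContDiff ℝ 2 f)
    (hsym : ∀ x ∈ Set.Icc (-α) α, iteratedDeriv 2 f x = iteratedDeriv 2 f (-x))
    (hdec : StrictAntiOn (iteratedDeriv 2 f) (Set.Icc 0 α)) :
    ∀ x₀ ∈ Set.Ioo a b, ∀ x ∈ Set.Icc a b, x ≠ x₀ →
      Real.sign (∫ t in x₀..x, iteratedDeriv 2 f t * (2 * t - x - x₀)) =
        -(Real.sign (x + x₀) * Real.sign (x - x₀)) := by
  intro x₀ hx₀ x hx hne
  have hg : Continuous (iteratedDeriv 2 f) := hf.continuous_iteratedDeriv 2 le_rfl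
  have hu := hsub (Set.Ioo_subset_Icc_self hx₀)
  have hv := hsub hx
  rcases lt_or_gt_of_ne hne with h | h
  · have hswap : ∀ t, 2 * t - x - x₀ = 2 * t - x₀ - x := fun t => by ring
    simp only [hswap]
    rw [intervalIntegral.integral_symm, Real.sign_neg,
      sign_weighted_integral hg hsym hdec hv hu h, Real.sign_of_neg (sub_neg.2 h), add_comm x₀ x]
    ring
  · rw [sign_weighted_integral hg hsym hdec hu hv h, Real.sign_of_pos (sub_pos.2 h), mul_one]
end

section
/- Let α > 0 and [a, b] ⊆ [-α, α] with a < b, let f : ℝ → ℝ be twice continuously differentiable, and suppose f'' is even-symmetric on [-α, α] (f''(x) = f''(-x) for all x ∈ [-α, α]) and strictly decreasing on [0, α]. Fix x₀ ∈ (a, b) and define r(x) = R_1(x; f, x₀)/(x - x₀)² for x ≠ x₀. Then for every x ∈ [a, b] with x ≠ x₀, the derivative r'(x) satisfies sign(r'(x)) = -sign(x + x₀); in particular r is strictly increasing on the part of [a, b] \ {x₀} where x < -x₀ and strictly decreasing on the part where x > -x₀. -/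
/-!
Write `N(u, v) = (f' u + f' v) (u - v) - 2 (f u - f v)` for twice the trapezoid-rule error of `f'`
on `[v, u]`. Then `r' x = N(x, x₀) / (x - x₀) ^ 3`, so everything reduces to the sign of `N(u, v)`
for `v < u`.

* `N(u, -u) = 0`, because by the evenness of `f''` the derivative of `t ↦ N(t, -t)` vanishes.
* If `v < u` and `0 < u + v`, i.e. `|v| < u`, then `∂N/∂u = f''(u) (u - v) - (f' u - f' v)`, which
  by the mean value theorem is `(f''(u) - f''(c)) (u - v)` with `|c| < u`, hence negative. As
  `N(|v|, v) = 0`, this gives `N(u, v) < 0`.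
* If `v < u` and `u + v < 0`, the reflection `x ↦ f (-x)` gives `0 < N(u, v)`.

The sign of `r'` yields the monotonicity of `r` on either side of `x₀`. Two points separated by `x₀`
are compared through `f''(x₀) / 2`, the value filling the removable singularity: the Lagrange form
`r x = f''(c) / 2`, with `c` strictly between `x` and `x₀`, shows on which side of it `r x` lies.
-/

/-- Twice the trapezoid-rule error vanishes on a symmetric interval when `f''` is even. -/
lemma trapezoid_symm {f f' f'' : ℝ → ℝ} {α : ℝ} (h1 : ∀ x, HasDerivAt f (f' x) x)
    (h2 : ∀ x, HasDerivAt f' (f'' x) x)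
    (hsym : ∀ x ∈ Set.Icc (-α) α, f'' x = f'' (-x)) {t : ℝ} (ht : 0 ≤ t) (htα : t ≤ α) :
    (f' t + f' (-t)) * (t - -t) - 2 * (f t - f (-t)) = 0 := by
  have hd : ∀ s, HasDerivAt (fun s => (f' s + f' (-s)) * (s - -s) - 2 * (f s - f (-s)))
      (2 * s * (f'' s - f'' (-s))) s := by
    intro s
    have n1 : HasDerivAt (fun s : ℝ => -s) (-1) s := hasDerivAt_neg s
    have e1 : HasDerivAt (fun s => f (-s)) (f' (-s) * -1) s := (h1 (-s)).comp s n1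
    have e2 : HasDerivAt (fun s => f' (-s)) (f'' (-s) * -1) s := (h2 (-s)).comp s n1
    have := (((h2 s).add e2).mul ((hasDerivAt_id s).sub n1)).sub
      (((h1 s).sub e1).const_mul 2)
    refine this.congr_deriv ?_
    simp only [Pi.add_apply, Pi.sub_apply, id]
    ring
  rcases ht.eq_or_lt with rfl | ht
  · simp
  obtain ⟨c, hc, h⟩ := exists_hasDerivAt_eq_slope _ _ ht
    (fun s _ => (hd s).continuousAt.continuousWithinAt) (fun s _ => hd s)
  rw [← hsym c ⟨by linarith [hc.1], by linarith [hc.2]⟩, eq_div_iff (by linarith)] at h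
  simp only [sub_self, neg_zero, mul_zero, zero_mul, sub_zero] at h
  exact h.symm

lemma trapezoid_neg {f f' f'' : ℝ → ℝ} {α : ℝ} (h1 : ∀ x, HasDerivAt f (f' x) x)
    (h2 : ∀ x, HasDerivAt f' (f'' x) x)
    (hsym : ∀ x ∈ Set.Icc (-α) α, f'' x = f'' (-x))
    (habs : ∀ s t, |s| < |t| → |t| ≤ α → f'' t < f'' s)
    {u v : ℝ} (hvu : v < u) (huv : 0 < u + v) (hu : u ≤ α) :
    (f' u + f' v) * (u - v) - 2 * (f u - f v) < 0 := by
  have hvu' : |v| < u := abs_lt.2 ⟨by linarith, hvu⟩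
  have hd : ∀ s, HasDerivAt (fun s => (f' s + f' v) * (s - v) - 2 * (f s - f v))
      (f'' s * (s - v) - (f' s - f' v)) s := by
    intro s
    have := (((h2 s).add_const (f' v)).mul ((hasDerivAt_id s).sub_const v)).sub
      (((h1 s).sub_const (f v)).const_mul 2)
    refine this.congr_deriv ?_
    simp only [id]
    ring
  have h0 : (f' |v| + f' v) * (|v| - v) - 2 * (f |v| - f v) = 0 := by
    rcases le_total 0 v with hv | hv
    · simp [abs_of_nonneg hv]
    · have := trapezoid_symm h1 h2 hsym (abs_nonneg v) (by linarith)
      rwa [abs_of_nonpos hv, neg_neg] at *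
  obtain ⟨c, hc, h⟩ := exists_hasDerivAt_eq_slope _ _ hvu'
    (fun s _ => (hd s).continuousAt.continuousWithinAt) (fun s _ => hd s)
  have hvc : v < c := (le_abs_self v).trans_lt hc.1
  have hc0 : 0 < c := (abs_nonneg v).trans_lt hc.1
  obtain ⟨e, he, h'⟩ := exists_hasDerivAt_eq_slope f' f'' hvc
    (fun s _ => (h2 s).continuousAt.continuousWithinAt) (fun s _ => h2 s)
  rw [eq_div_iff (by linarith)] at h h'
  have hlt : f'' c < f'' e := habs e c
    (by rw [abs_of_pos hc0]; exact abs_lt.2 ⟨by linarith [neg_abs_le v, hc.1, he.1], he.2⟩)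
    (by rw [abs_of_pos hc0]; linarith [hc.2])
  simp only [h0, sub_zero] at h
  rw [← h, ← h', ← sub_mul]
  exact mul_neg_of_neg_of_pos (mul_neg_of_neg_of_pos (by linarith) (by linarith)) (by linarith)

lemma hasDerivAt_reflect {f f' : ℝ → ℝ} (h1 : ∀ x, HasDerivAt f (f' x) x) (x : ℝ) :
    HasDerivAt (fun x => f (-x)) (-f' (-x)) x :=
  ((h1 (-x)).comp x (hasDerivAt_neg x)).congr_deriv (by ring)

lemma hasDerivAt_neg_reflect {f f' : ℝ → ℝ} (h1 : ∀ x, HasDerivAt f (f' x) x) (x : ℝ) :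
    HasDerivAt (fun x => -f (-x)) (f' (-x)) x :=
  (hasDerivAt_reflect h1 x).neg.congr_deriv (by ring)

lemma trapezoid_pos {f f' f'' : ℝ → ℝ} {α : ℝ} (h1 : ∀ x, HasDerivAt f (f' x) x)
    (h2 : ∀ x, HasDerivAt f' (f'' x) x)
    (hsym : ∀ x ∈ Set.Icc (-α) α, f'' x = f'' (-x))
    (habs : ∀ s t, |s| < |t| → |t| ≤ α → f'' t < f'' s)
    {u v : ℝ} (hvu : v < u) (huv : u + v < 0) (hv : -α ≤ v) :
    0 < (f' u + f' v) * (u - v) - 2 * (f u - f v) := by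
  have := trapezoid_neg (f := fun x => f (-x)) (f' := fun x => -f' (-x))
    (f'' := fun x => f'' (-x)) (α := α) (u := -v) (v := -u)
    (hasDerivAt_reflect h1) (hasDerivAt_neg_reflect h2)
    (fun x hx => hsym (-x) ⟨by linarith [hx.2], by linarith [hx.1]⟩)
    (fun s t hs ht => habs _ _ (by simpa using hs) (by simpa using ht))
    (by linarith) (by linarith) (by linarith)
  simp only [neg_neg] at this
  linarith

/-- Lagrange form of the first-order remainder, to the right of the base point. -/
lemma lagrange_right {f f' f'' : ℝ → ℝ} (h1 : ∀ x, HasDerivAt f (f' x) x)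
    (h2 : ∀ x, HasDerivAt f' (f'' x) x) {x₀ x : ℝ} (hx : x₀ < x) :
    ∃ c ∈ Set.Ioo x₀ x, (f x - f x₀ - f' x₀ * (x - x₀)) / (x - x₀) ^ 2 = f'' c / 2 := by
  set K := (f x - f x₀ - f' x₀ * (x - x₀)) / (x - x₀) ^ 2 with hK
  have hne : x - x₀ ≠ 0 := by linarith
  rw [eq_div_iff (pow_ne_zero 2 hne)] at hK
  have hd : ∀ s, HasDerivAt (fun s => f s - f x₀ - f' x₀ * (s - x₀) - K * (s - x₀) ^ 2)
      (f' s - f' x₀ - 2 * K * (s - x₀)) s := by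
    intro s
    have i := (hasDerivAt_id s).sub_const x₀
    refine ((((h1 s).sub_const (f x₀)).sub (i.const_mul (f' x₀))).sub
      ((i.pow 2).const_mul K)).congr_deriv ?_
    simp only [id]
    push_cast
    ring
  obtain ⟨d, hd', h⟩ := exists_hasDerivAt_eq_slope _ _ hx
    (fun s _ => (hd s).continuousAt.continuousWithinAt) (fun s _ => hd s)
  obtain ⟨c, hc, h'⟩ := exists_hasDerivAt_eq_slope f' f'' hd'.1
    (fun s _ => (h2 s).continuousAt.continuousWithinAt) (fun s _ => h2 s)
  refine ⟨c, ⟨hc.1, hc.2.trans hd'.2⟩, ?_⟩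
  have hne' : d - x₀ ≠ 0 := by linarith [hd'.1]
  rw [hK] at h
  simp only [sub_self, mul_zero, ne_eq, OfNat.ofNat_ne_zero, not_false_eq_true, zero_pow,
    zero_div] at h
  have h3 : f' d - f' x₀ = 2 * K * (d - x₀) := by linarith
  rw [h', h3]
  field_simp

lemma lagrange_left {f f' f'' : ℝ → ℝ} (h1 : ∀ x, HasDerivAt f (f' x) x)
    (h2 : ∀ x, HasDerivAt f' (f'' x) x) {x₀ x : ℝ} (hx : x < x₀) :
    ∃ c ∈ Set.Ioo x x₀, (f x - f x₀ - f' x₀ * (x - x₀)) / (x - x₀) ^ 2 = f'' c / 2 := by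
  obtain ⟨c, hc, h⟩ := lagrange_right (hasDerivAt_reflect h1) (hasDerivAt_neg_reflect h2)
    (neg_lt_neg hx)
  refine ⟨-c, ⟨by linarith [hc.2], by linarith [hc.1]⟩, ?_⟩
  simp only [neg_neg] at h
  rw [← h]
  congr 1 <;> ring

/-- with `f''` even-symmetric on `[-α, α] ⊇ [a, b]` and strictly decreasing on
`[0, α]`, and `r(x) = R₁(x; f, x₀)/(x - x₀)²`, we have `sign (r'(x)) = -sign (x + x₀)` on
`[a, b] \ {x₀}`; in particular `r` is strictly increasing where `x < -x₀` and strictly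
decreasing where `x > -x₀`. -/
theorem sign_deriv_remainder_ratio (α a b x₀ : ℝ) (hα : 0 < α)
    (hsub : Set.Icc a b ⊆ Set.Icc (-α) α) (hab : a < b)
    (f : ℝ → ℝ) (hf : ContDiff ℝ 2 f)
    (hsym : ∀ x ∈ Set.Icc (-α) α, iteratedDeriv 2 f x = iteratedDeriv 2 f (-x))
    (hdec : StrictAntiOn (iteratedDeriv 2 f) (Set.Icc 0 α))
    (hx₀ : x₀ ∈ Set.Ioo a b)
    (r : ℝ → ℝ)
    (hr : ∀ x, r x = (f x - f x₀ - deriv f x₀ * (x - x₀)) / (x - x₀) ^ 2) :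
    (∀ x ∈ Set.Icc a b, x ≠ x₀ → Real.sign (deriv r x) = -Real.sign (x + x₀)) ∧
    StrictMonoOn r {x | x ∈ Set.Icc a b ∧ x ≠ x₀ ∧ x < -x₀} ∧
    StrictAntiOn r {x | x ∈ Set.Icc a b ∧ x ≠ x₀ ∧ -x₀ < x} := by
  have h1 : ∀ x, HasDerivAt f (deriv f x) x := fun x =>
    (hf.differentiable (by norm_num) x).hasDerivAt
  have h2 : ∀ x, HasDerivAt (deriv f) (iteratedDeriv 2 f x) x := by
    intro x
    have := hf.differentiable_iteratedDeriv 1 (by norm_num) x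
    rw [iteratedDeriv_one] at this
    rw [iteratedDeriv_succ, iteratedDeriv_one]
    exact this.hasDerivAt
  generalize iteratedDeriv 2 f = f'' at *
  generalize deriv f = f' at *
  have heq : ∀ t, |t| ≤ α → f'' t = f'' |t| := by
    intro t ht
    rcases abs_choice t with h | h
    · rw [h]
    · rw [h]; exact hsym t (abs_le.1 ht)
  have habs : ∀ s t, |s| < |t| → |t| ≤ α → f'' t < f'' s := by
    intro s t hst ht
    rw [heq t ht, heq s (by linarith)]
    exact hdec ⟨abs_nonneg s, by linarith⟩ ⟨abs_nonneg t, ht⟩ hst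
  have hx₀α := hsub ⟨hx₀.1.le, hx₀.2.le⟩
  have hrd : ∀ x, x ≠ x₀ → HasDerivAt r
      (((f' x + f' x₀) * (x - x₀) - 2 * (f x - f x₀)) / (x - x₀) ^ 3) x := by
    intro x hx
    have hne : x - x₀ ≠ 0 := sub_ne_zero.2 hx
    have i := (hasDerivAt_id x).sub_const x₀
    have := (((h1 x).sub_const (f x₀)).sub (i.const_mul (f' x₀))).div (i.pow 2)
      (pow_ne_zero 2 hne)
    rw [show r = _ from funext hr]
    refine this.congr_deriv ?_
    simp only [id, Pi.sub_apply, Pi.pow_apply]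
    push_cast
    field_simp
    ring
  have hneg : ∀ x ∈ Set.Icc a b, x ≠ x₀ → -x₀ < x → deriv r x < 0 := by
    intro x hx hne hlt
    rw [(hrd x hne).deriv]
    have hxα := hsub hx
    rcases lt_or_gt_of_ne hne with h | h
    · have := trapezoid_neg h1 h2 hsym habs h (by linarith) hx₀α.2
      exact div_neg_of_pos_of_neg (by linarith) (Odd.pow_neg (by decide) (by linarith))
    · have := trapezoid_neg h1 h2 hsym habs h (by linarith) hxα.2
      exact div_neg_of_neg_of_pos this (pow_pos (by linarith) 3)
  have hpos : ∀ x ∈ Set.Icc a b, x ≠ x₀ → x < -x₀ → 0 < deriv r x := by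
    intro x hx hne hlt
    rw [(hrd x hne).deriv]
    have hxα := hsub hx
    rcases lt_or_gt_of_ne hne with h | h
    · have := trapezoid_pos h1 h2 hsym habs h (by linarith) hxα.1
      exact div_pos_of_neg_of_neg (by linarith) (Odd.pow_neg (by decide) (by linarith))
    · have := trapezoid_pos h1 h2 hsym habs h (by linarith) hx₀α.1
      exact div_pos this (pow_pos (by linarith) 3)
  refine ⟨?_, ?_, ?_⟩
  · intro x hx hne
    rcases lt_trichotomy x (-x₀) with h | h | h
    · rw [Real.sign_of_pos (hpos x hx hne h), Real.sign_of_neg (by linarith), neg_neg]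
    · have hN : (f' x + f' x₀) * (x - x₀) - 2 * (f x - f x₀) = 0 := by
        rcases le_total 0 x with h0 | h0
        · have := trapezoid_symm h1 h2 hsym h0 (hsub hx).2
          rwa [show -x = x₀ by linarith] at this
        · have := trapezoid_symm h1 h2 hsym (t := x₀) (by linarith) hx₀α.2
          rw [show -x₀ = x by linarith] at this
          linarith
      rw [(hrd x hne).deriv, hN, h]
      simp
    · rw [Real.sign_of_neg (hneg x hx hne h), Real.sign_of_pos (by linarith)]
  · rintro x ⟨hx, hxne, hxlt⟩ y ⟨hy, hyne, hylt⟩ hxy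
    by_cases hsep : x < x₀ ∧ x₀ < y
    · obtain ⟨c, hc, ec⟩ := lagrange_left h1 h2 hsep.1
      obtain ⟨d, hd, ed⟩ := lagrange_right h1 h2 hsep.2
      have hx₀n : x₀ < 0 := by linarith
      have := (hsub hx).1
      have hcn : c < 0 := hc.2.trans hx₀n
      have i1 := habs x₀ c (by rw [abs_of_neg hx₀n, abs_of_neg hcn]; linarith [hc.2])
        (by rw [abs_of_neg hcn]; linarith [hc.1])
      have i2 := habs d x₀
        (by rw [abs_of_neg hx₀n]; exact abs_lt.2 ⟨by linarith [hd.1], by linarith [hd.2]⟩)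
        (abs_le.2 hx₀α)
      rw [hr, hr, ec, ed]
      linarith
    · have hne : ∀ z ∈ Set.Icc x y, z ≠ x₀ := by
        rintro z hz rfl
        exact hsep ⟨lt_of_le_of_ne hz.1 hxne, lt_of_le_of_ne hz.2 hyne.symm⟩
      refine strictMonoOn_of_deriv_pos (convex_Icc x y)
        (fun z hz => (hrd z (hne z hz)).continuousAt.continuousWithinAt) (fun z hz => ?_)
        (Set.left_mem_Icc.2 hxy.le) (Set.right_mem_Icc.2 hxy.le) hxy
      have hz := interior_subset hz
      exact hpos z ⟨hx.1.trans hz.1, hz.2.trans hy.2⟩ (hne z hz) (hz.2.trans_lt hylt)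
  · rintro x ⟨hx, hxne, hxlt⟩ y ⟨hy, hyne, hylt⟩ hxy
    by_cases hsep : x < x₀ ∧ x₀ < y
    · obtain ⟨c, hc, ec⟩ := lagrange_left h1 h2 hsep.1
      obtain ⟨d, hd, ed⟩ := lagrange_right h1 h2 hsep.2
      have hx₀p : 0 < x₀ := by linarith
      have := (hsub hy).2
      have hdp : 0 < d := hx₀p.trans hd.1
      have i1 := habs x₀ d (by rw [abs_of_pos hx₀p, abs_of_pos hdp]; exact hd.1)
        (by rw [abs_of_pos hdp]; linarith [hd.2])
      have i2 := habs c x₀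
        (by rw [abs_of_pos hx₀p]; exact abs_lt.2 ⟨by linarith [hc.1], hc.2⟩)
        (abs_le.2 hx₀α)
      rw [hr, hr, ec, ed]
      linarith
    · have hne : ∀ z ∈ Set.Icc x y, z ≠ x₀ := by
        rintro z hz rfl
        exact hsep ⟨lt_of_le_of_ne hz.1 hxne, lt_of_le_of_ne hz.2 hyne.symm⟩
      refine strictAntiOn_of_deriv_neg (convex_Icc x y)
        (fun z hz => (hrd z (hne z hz)).continuousAt.continuousWithinAt) (fun z hz => ?_)
        (Set.left_mem_Icc.2 hxy.le) (Set.right_mem_Icc.2 hxy.le) hxy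
      have hz := interior_subset hz
      exact hneg z ⟨hx.1.trans hz.1, hz.2.trans hy.2⟩ (hne z hz) (hxlt.trans_le hz.1)
end

section
/- Let α > 0 and [a, b] ⊆ [-α, α] with a < b, let f : ℝ → ℝ be twice continuously differentiable, and suppose f'' is even-symmetric on [-α, α] (f''(x) = f''(-x) for all x ∈ [-α, α]) and strictly decreasing on [0, α]. Fix x₀ ∈ (a, b) and define r(x) = R_1(x; f, x₀)/(x - x₀)² for x ≠ x₀, extended at x = x₀ by r(x₀) = f''(x₀)/2, and let c = min(b, max(-x₀, a)). Then for every x ∈ [a, b] with x ≠ x₀: min(r(a), r(b)) ≤ r(x) ≤ r(c). Consequently the infimum of r over [a, b] \ {x₀} equals min(r(a), r(b)) and the supremum equals r(c); these two values are the endpoints of the interval defining the sharp quadratic Taylor polynomial enclosure of f at x₀ over [a, b]. -/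
/-! With `d = f'` and `g = f''`, the remainder ratio `r` satisfies, for `x ≠ x₀`,
`r'(x) = ((x - x₀)(d x + d x₀) - 2(f x - f x₀)) / (x - x₀)³`,
so its sign is governed by the error of the trapezoidal rule for `d` on the interval between
`x₀` and `x`. Removing the linear part of `f` at `0`, which does not change this error, turns `f`
into an even and `d` into an odd function on `[-α, α]`, with `d` concave on `[0, α]`. Two
consequences of concavity (the trapezoidal rule underestimates, and `y ↦ d y / y` is antitone) then
show that `r'(x)` has the sign of `-(x + x₀)`: this is `trapezoid_error_sign`. Hence `r`, which is
continuous at `x₀` by Taylor's theorem, increases on `[-α, -x₀]` and decreases on `[-x₀, α]`. On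
`[a, b]` its minimum is therefore attained at an endpoint and its maximum at the projection `c` of
`-x₀` onto `[a, b]`. The point `c` can coincide with the removed point `x₀` (when `x₀ = 0`), and
then the supremum is approached by continuity instead of being attained. -/

/-- Tangent line bounds for a function `d` whose derivative `g` is antitone on `[0, α]`. -/
lemma tangent_bounds {α : ℝ} {d g : ℝ → ℝ} (hg : ∀ x, HasDerivAt d (g x) x)
    (hdec : AntitoneOn g (Set.Icc 0 α)) {y z : ℝ} (hy : 0 ≤ y) (hyz : y ≤ z) (hz : z ≤ α) :
    (z - y) * g z ≤ d z - d y ∧ d z - d y ≤ (z - y) * g y := by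
  rcases hyz.eq_or_lt with rfl | hlt
  · simp
  obtain ⟨ξ, hξ, he⟩ := exists_hasDerivAt_eq_slope d g hlt
    (fun x _ => (hg x).continuousAt.continuousWithinAt) (fun x _ => hg x)
  have hpos : 0 < z - y := sub_pos.2 hlt
  rw [eq_div_iff hpos.ne'] at he
  have h1 : g z ≤ g ξ := hdec ⟨by linarith [hξ.1], by linarith [hξ.2]⟩ ⟨by linarith, hz⟩ hξ.2.le
  have h2 : g ξ ≤ g y := hdec ⟨hy, by linarith⟩ ⟨by linarith [hξ.1], by linarith [hξ.2]⟩ hξ.1.le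
  constructor <;> nlinarith

/-- The trapezoidal rule underestimates the integral of the concave function `d`. -/
lemma trapezoid_le {α : ℝ} {f d g : ℝ → ℝ} (hd : ∀ x, HasDerivAt f (d x) x)
    (hg : ∀ x, HasDerivAt d (g x) x) (hdec : AntitoneOn g (Set.Icc 0 α))
    {y z : ℝ} (hy : 0 ≤ y) (hyz : y ≤ z) (hz : z ≤ α) :
    (z - y) * (d z + d y) ≤ 2 * (f z - f y) := by
  have hK : ∀ t, HasDerivAt (fun t => 2 * (f t - f y) - (t - y) * (d t + d y))
      (d t - d y - (t - y) * g t) t := by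
    intro t
    have := (((hd t).sub_const (f y)).const_mul 2).sub
      (((hasDerivAt_id t).sub_const y).mul ((hg t).add_const (d y)))
    refine this.congr_deriv ?_
    simp only [id]
    ring
  have hmono : MonotoneOn (fun t => 2 * (f t - f y) - (t - y) * (d t + d y)) (Set.Icc y z) := by
    refine monotoneOn_of_deriv_nonneg (convex_Icc y z)
      (fun t _ => (hK t).continuousAt.continuousWithinAt)
      (fun t _ => (hK t).differentiableAt.differentiableWithinAt) ?_
    intro t ht
    rw [interior_Icc] at ht
    rw [(hK t).deriv]
    linarith [(tangent_bounds hg hdec hy ht.1.le (ht.2.le.trans hz)).1]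
  have := hmono (Set.left_mem_Icc.2 hyz) (Set.right_mem_Icc.2 hyz) hyz
  simp only [sub_self, zero_mul, mul_zero] at this
  linarith

/-- If `g` is even on `[-α, α]`, its first and second antiderivatives are odd and even up to the
linear part at `0`. -/
lemma parity {α : ℝ} (hα : 0 < α) {f d g : ℝ → ℝ} (hd : ∀ x, HasDerivAt f (d x) x)
    (hg : ∀ x, HasDerivAt d (g x) x) (hsym : ∀ x ∈ Set.Icc (-α) α, g x = g (-x)) :
    ∀ x ∈ Set.Icc (-α) α, d x + d (-x) = 2 * d 0 ∧ f x - f (-x) = 2 * d 0 * x := by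
  have h0 : (0 : ℝ) ∈ Set.Icc (-α) α := ⟨by linarith, hα.le⟩
  have hD : ∀ t, HasDerivAt (fun t => d t + d (-t)) (g t - g (-t)) t := by
    intro t
    have := (hg t).add ((hg (-t)).comp t (hasDerivAt_neg t))
    exact this.congr_deriv (by ring)
  have h1 : ∀ x ∈ Set.Icc (-α) α, d x + d (-x) = 2 * d 0 := by
    have hc := constant_of_has_deriv_right_zero (f := fun t => d t + d (-t)) (a := -α) (b := α)
      (fun t _ => (hD t).continuousAt.continuousWithinAt)
      (fun t ht => ((hD t).congr_deriv
        (sub_eq_zero.2 (hsym t ⟨ht.1, ht.2.le⟩))).hasDerivWithinAt)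
    intro x hx
    have e := hc x hx
    rw [← hc 0 h0] at e
    simp only [neg_zero] at e
    linarith
  have hF : ∀ t, HasDerivAt (fun t => f t - f (-t) - 2 * d 0 * t) (d t + d (-t) - 2 * d 0) t := by
    intro t
    have := ((hd t).sub ((hd (-t)).comp t (hasDerivAt_neg t))).sub
      ((hasDerivAt_id t).const_mul (2 * d 0))
    exact this.congr_deriv (by ring)
  intro x hx
  refine ⟨h1 x hx, ?_⟩
  have hc := constant_of_has_deriv_right_zero (f := fun t => f t - f (-t) - 2 * d 0 * t)
    (a := -α) (b := α) (fun t _ => (hF t).continuousAt.continuousWithinAt)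
    (fun t ht => ((hF t).congr_deriv
      (sub_eq_zero.2 (h1 t ⟨ht.1, ht.2.le⟩))).hasDerivWithinAt)
  have e := hc x hx
  rw [← hc 0 h0] at e
  simp only [neg_zero] at e
  linarith

/-- The sign of the trapezoidal error when `|x| ≤ y`. For negative `x` the interval `[x, -x]`
contributes nothing by symmetry, which leaves the trapezoidal bound on `[-x, y]` and the fact that
the chord slope `(d t - d 0) / t` is antitone. -/
lemma trapezoid_error_nonneg {α : ℝ} (hα : 0 < α) {f d g : ℝ → ℝ}
    (hd : ∀ x, HasDerivAt f (d x) x) (hg : ∀ x, HasDerivAt d (g x) x)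
    (hsym : ∀ x ∈ Set.Icc (-α) α, g x = g (-x)) (hdec : AntitoneOn g (Set.Icc 0 α))
    {x y : ℝ} (hxy : x ≤ y) (hxy' : -y ≤ x) (hy : y ≤ α) :
    0 ≤ (x - y) * (d x + d y) - 2 * (f x - f y) := by
  rcases le_total 0 x with hx | hx
  · linarith [trapezoid_le hd hg hdec hx hxy hy]
  · have hnx : 0 ≤ -x := by linarith
    have hxy2 : -x ≤ y := by linarith
    obtain ⟨p1, p2⟩ := parity hα hd hg hsym x ⟨by linarith, by linarith⟩
    have ht := trapezoid_le hd hg hdec hnx hxy2 hy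
    have b1 := (tangent_bounds hg hdec hnx hxy2 hy).2
    have b2 := (tangent_bounds hg hdec le_rfl hnx (by linarith)).1
    have b3 := mul_le_mul_of_nonneg_left b1 hnx
    have b4 := mul_le_mul_of_nonneg_left b2 (by linarith : 0 ≤ y - -x)
    have e1 : d x = 2 * d 0 - d (-x) := by linarith
    have e2 : f x = f (-x) + 2 * d 0 * x := by linarith
    rw [e1, e2]
    linarith

/-- The trapezoidal error, times `x - y`, has the sign of `-(x + y)`. The product below is invariant
under `(x, y) ↦ (y, x)` and `(x, y) ↦ (-x, -y)`, which reduces the claim to `|x| ≤ y`. -/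
lemma trapezoid_error_sign {α : ℝ} (hα : 0 < α) {f d g : ℝ → ℝ}
    (hd : ∀ x, HasDerivAt f (d x) x) (hg : ∀ x, HasDerivAt d (g x) x)
    (hsym : ∀ x ∈ Set.Icc (-α) α, g x = g (-x)) (hdec : AntitoneOn g (Set.Icc 0 α))
    {x y : ℝ} (hx : x ∈ Set.Icc (-α) α) (hy : y ∈ Set.Icc (-α) α) :
    ((x - y) * (d x + d y) - 2 * (f x - f y)) * ((x - y) * (x + y)) ≤ 0 := by
  have key : ∀ u v : ℝ, u ≤ v → -v ≤ u → v ≤ α →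
      ((u - v) * (d u + d v) - 2 * (f u - f v)) * ((u - v) * (u + v)) ≤ 0 := by
    intro u v h1 h2 h3
    exact mul_nonpos_of_nonneg_of_nonpos
      (trapezoid_error_nonneg hα hd hg hsym hdec h1 h2 h3)
      (mul_nonpos_of_nonpos_of_nonneg (by linarith) (by linarith))
  obtain ⟨p1, p2⟩ := parity hα hd hg hsym x hx
  obtain ⟨q1, q2⟩ := parity hα hd hg hsym y hy
  have e1 : d (-x) = 2 * d 0 - d x := by linarith
  have e2 : f (-x) = f x - 2 * d 0 * x := by linarith
  have e3 : d (-y) = 2 * d 0 - d y := by linarith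
  have e4 : f (-y) = f y - 2 * d 0 * y := by linarith
  rcases le_total x y with h | h <;> rcases le_total (-y) x with h' | h'
  · exact key x y h h' hy.2
  · have := key (-y) (-x) (by linarith) (by linarith) (by linarith [hx.1])
    rw [e1, e2, e3, e4] at this
    linarith
  · have := key y x h (by linarith) hx.2
    linarith
  · have := key (-x) (-y) (by linarith) (by linarith) (by linarith [hy.1])
    rw [e1, e2, e3, e4] at this
    linarith

/-- `r` is unimodal on `[-α, α]` with peak at `-x₀`. -/
lemma ratio_unimodal {α x₀ : ℝ} (hα : 0 < α) {f d g r : ℝ → ℝ}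
    (hd : ∀ x, HasDerivAt f (d x) x) (hg : ∀ x, HasDerivAt d (g x) x)
    (hsym : ∀ x ∈ Set.Icc (-α) α, g x = g (-x)) (hdec : AntitoneOn g (Set.Icc 0 α))
    (hx₀ : x₀ ∈ Set.Icc (-α) α) (hcont : Continuous r)
    (hr : ∀ x, x ≠ x₀ → r x = (f x - f x₀ - d x₀ * (x - x₀)) / (x - x₀) ^ 2) :
    MonotoneOn r (Set.Icc (-α) (-x₀)) ∧ AntitoneOn r (Set.Icc (-x₀) α) := by
  have hder : ∀ x, x ≠ x₀ → HasDerivAt r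
      (((x - x₀) * (d x + d x₀) - 2 * (f x - f x₀)) * (x - x₀) / (x - x₀) ^ 4) x := by
    intro x hx
    have hne : x - x₀ ≠ 0 := sub_ne_zero.2 hx
    have h1 := (((hd x).sub_const (f x₀)).sub
      (((hasDerivAt_id x).sub_const x₀).const_mul (d x₀))).div
      (((hasDerivAt_id x).sub_const x₀).pow 2) (pow_ne_zero 2 hne)
    have h2 : HasDerivAt (fun x => (f x - f x₀ - d x₀ * (x - x₀)) / (x - x₀) ^ 2)
        (((x - x₀) * (d x + d x₀) - 2 * (f x - f x₀)) * (x - x₀) / (x - x₀) ^ 4) x := by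
      refine h1.congr_deriv ?_
      simp only [id, Pi.sub_apply, Pi.pow_apply]
      field_simp
      push_cast
      ring
    refine h2.congr_of_eventuallyEq ?_
    filter_upwards [isOpen_ne.mem_nhds hx] with t ht using hr t ht
  -- Monotonicity away from `x₀`, where `r` need not be differentiable.
  have up : ∀ p q, -α ≤ p → q ≤ α → q ≤ -x₀ → x₀ ∉ Set.Ioo p q →
      MonotoneOn r (Set.Icc p q) := by
    intro p q hp hq hq' hn
    have hne : ∀ t ∈ Set.Ioo p q, t ≠ x₀ := fun t ht h => hn (h ▸ ht)
    refine monotoneOn_of_deriv_nonneg (convex_Icc p q) hcont.continuousOn ?_ ?_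
    · rw [interior_Icc]
      exact fun t ht => (hder t (hne t ht)).differentiableAt.differentiableWithinAt
    · rw [interior_Icc]
      intro t ht
      rw [(hder t (hne t ht)).deriv]
      have hs := trapezoid_error_sign hα hd hg hsym hdec
        (x := t) (y := x₀) ⟨by linarith [ht.1], by linarith [ht.2]⟩ hx₀
      rw [← mul_assoc] at hs
      exact div_nonneg (nonneg_of_mul_nonpos_left hs (by linarith [ht.2])) (by positivity)
  have down : ∀ p q, -α ≤ p → q ≤ α → -x₀ ≤ p → x₀ ∉ Set.Ioo p q →
      AntitoneOn r (Set.Icc p q) := by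
    intro p q hp hq hq' hn
    have hne : ∀ t ∈ Set.Ioo p q, t ≠ x₀ := fun t ht h => hn (h ▸ ht)
    refine antitoneOn_of_deriv_nonpos (convex_Icc p q) hcont.continuousOn ?_ ?_
    · rw [interior_Icc]
      exact fun t ht => (hder t (hne t ht)).differentiableAt.differentiableWithinAt
    · rw [interior_Icc]
      intro t ht
      rw [(hder t (hne t ht)).deriv]
      have hs := trapezoid_error_sign hα hd hg hsym hdec
        (x := t) (y := x₀) ⟨by linarith [ht.1], by linarith [ht.2]⟩ hx₀
      rw [← mul_assoc] at hs
      exact div_nonpos_of_nonpos_of_nonneg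
        (nonpos_of_mul_nonpos_left hs (by linarith [ht.1])) (by positivity)
  obtain ⟨l, u⟩ := hx₀
  rcases le_total 0 x₀ with h | h
  · refine ⟨up _ _ le_rfl (by linarith) le_rfl (fun hh => by linarith [hh.2]), ?_⟩
    have hle : -x₀ ≤ x₀ := by linarith
    rw [← Set.Icc_union_Icc_eq_Icc hle u]
    exact (down _ _ (by linarith) u le_rfl (fun hh => lt_irrefl _ hh.2)).union_right
      (down _ _ l le_rfl hle (fun hh => lt_irrefl _ hh.1)) (isGreatest_Icc hle) (isLeast_Icc u)
  · refine ⟨?_, down _ _ (by linarith) le_rfl le_rfl (fun hh => by linarith [hh.1])⟩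
    have hle : x₀ ≤ -x₀ := by linarith
    rw [← Set.Icc_union_Icc_eq_Icc l hle]
    exact (up _ _ le_rfl u hle (fun hh => lt_irrefl _ hh.2)).union_right
      (up _ _ l (by linarith) le_rfl (fun hh => lt_irrefl _ hh.1)) (isGreatest_Icc l)
      (isLeast_Icc hle)

/-- The value `f''(x₀) / 2` at `x₀` makes `r` continuous. -/
lemma ratio_continuous {x₀ : ℝ} {f r : ℝ → ℝ} (hf : ContDiff ℝ 2 f)
    (hr : ∀ x, r x = if x = x₀ then iteratedDeriv 2 f x₀ / 2
      else (f x - f x₀ - deriv f x₀ * (x - x₀)) / (x - x₀) ^ 2) : Continuous r := by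
  rw [continuous_iff_continuousAt]
  intro x
  by_cases hx : x = x₀
  · subst hx
    rw [← continuousWithinAt_compl_self, ContinuousWithinAt]
    have ht := Real.taylor_tendsto (f := f) (x₀ := x) (n := 2) convex_univ (Set.mem_univ x)
      (by exact_mod_cast hf.contDiffOn)
    rw [nhdsWithin_univ] at ht
    have ht' := (ht.mono_left (nhdsWithin_le_nhds (s := {x}ᶜ))).add_const
      (iteratedDeriv 2 f x / 2)
    rw [zero_add] at ht'
    rw [hr x, if_pos rfl]
    refine ht'.congr' ?_
    filter_upwards [self_mem_nhdsWithin] with t ht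
    have hne : t - x ≠ 0 := sub_ne_zero.2 ht
    rw [hr t, if_neg (sub_ne_zero.1 hne), taylorWithinEval_succ, taylorWithinEval_succ,
      taylor_within_zero_eval, iteratedDerivWithin_univ, iteratedDerivWithin_univ, iteratedDeriv_one]
    simp only [smul_eq_mul]
    norm_num [Nat.factorial]
    field_simp
    ring
  · have hc : ContinuousAt (fun x => (f x - f x₀ - deriv f x₀ * (x - x₀)) / (x - x₀) ^ 2) x := by
      have := hf.continuous.continuousAt (x := x)
      exact ContinuousAt.div (by fun_prop) (by fun_prop) (pow_ne_zero 2 (sub_ne_zero.2 hx))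
    refine hc.congr ?_
    filter_upwards [isOpen_ne.mem_nhds hx] with t ht
    rw [hr t, if_neg ht]


/-- Theorem for functions with even-symmetric Hessian: with `f''` even-symmetric
on `[-α, α] ⊇ [a, b]` and strictly decreasing on `[0, α]`, `x₀ ∈ (a, b)`,
`r(x) = R₁(x; f, x₀)/(x - x₀)²` (extended by `r(x₀) = f''(x₀)/2`), and
`c = min b (max (-x₀) a)`: `min (r a) (r b) ≤ r x ≤ r c` for all `x ∈ [a, b] \ {x₀}`, and the
infimum and supremum of `r` over `[a, b] \ {x₀}` are `min (r a) (r b)` and `r c`, the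
endpoints of the sharp quadratic Taylor polynomial enclosure of `f` at `x₀` over `[a, b]`. -/
theorem sharp_quadratic_enclosure_even_symmetric (α a b x₀ : ℝ) (hα : 0 < α)
    (hsub : Set.Icc a b ⊆ Set.Icc (-α) α) (hab : a < b)
    (f : ℝ → ℝ) (hf : ContDiff ℝ 2 f)
    (hsym : ∀ x ∈ Set.Icc (-α) α, iteratedDeriv 2 f x = iteratedDeriv 2 f (-x))
    (hdec : StrictAntiOn (iteratedDeriv 2 f) (Set.Icc 0 α))
    (hx₀ : x₀ ∈ Set.Ioo a b)
    (r : ℝ → ℝ)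
    (hr : ∀ x, r x = if x = x₀ then iteratedDeriv 2 f x₀ / 2
      else (f x - f x₀ - deriv f x₀ * (x - x₀)) / (x - x₀) ^ 2)
    (c : ℝ) (hc : c = min b (max (-x₀) a)) :
    (∀ x ∈ Set.Icc a b, x ≠ x₀ → min (r a) (r b) ≤ r x ∧ r x ≤ r c) ∧
    sInf (r '' (Set.Icc a b \ {x₀})) = min (r a) (r b) ∧
    sSup (r '' (Set.Icc a b \ {x₀})) = r c := by
  have hcont := ratio_continuous hf hr
  have hd : ∀ x, HasDerivAt f (deriv f x) x := fun x =>
    ((hf.differentiable (by norm_num)) x).hasDerivAt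
  have hg : ∀ x, HasDerivAt (deriv f) (iteratedDeriv 2 f x) x := by
    intro x
    have h1 : Differentiable ℝ (iteratedDeriv 1 f) :=
      hf.differentiable_iteratedDeriv 1 (by norm_num)
    rw [iteratedDeriv_one] at h1
    rw [iteratedDeriv_succ, iteratedDeriv_one]
    exact (h1 x).hasDerivAt
  have hA := hsub (Set.left_mem_Icc.2 hab.le)
  have hB := hsub (Set.right_mem_Icc.2 hab.le)
  obtain ⟨hup, hdown⟩ := ratio_unimodal hα hd hg hsym hdec.antitoneOn
    (hsub (Set.Ioo_subset_Icc_self hx₀)) hcont (fun x hx => by rw [hr x, if_neg hx])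
  have hcm : c ∈ Set.Icc a b := by
    rw [hc]
    exact ⟨le_min hab.le (le_max_right _ _), min_le_left _ _⟩
  have hlow : ∀ x ∈ Set.Icc a b, min (r a) (r b) ≤ r x := by
    intro x hx
    rcases le_total x (-x₀) with h | h
    · exact (min_le_left _ _).trans
        (hup ⟨hA.1, hx.1.trans h⟩ ⟨hA.1.trans hx.1, h⟩ hx.1)
    · exact (min_le_right _ _).trans
        (hdown ⟨h, hx.2.trans hB.2⟩ ⟨h.trans hx.2, hB.2⟩ hx.2)
  have hhigh : ∀ x ∈ Set.Icc a b, r x ≤ r c := by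
    intro x hx
    rcases le_total (-x₀) a with h1 | h1
    · have hca : c = a := by rw [hc, max_eq_right h1, min_eq_right hab.le]
      rw [hca]
      exact hdown ⟨h1, hA.2⟩ ⟨h1.trans hx.1, hx.2.trans hB.2⟩ hx.1
    · rw [max_eq_left h1] at hc
      rcases le_total b (-x₀) with h2 | h2
      · rw [min_eq_left h2] at hc
        rw [hc]
        exact hup ⟨hA.1.trans hx.1, hx.2.trans h2⟩ ⟨hB.1, h2⟩ hx.2
      · rw [min_eq_right h2] at hc
        have l : -α ≤ -x₀ := hA.1.trans h1
        have u : -x₀ ≤ α := h2.trans hB.2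
        rw [hc]
        rcases le_total x (-x₀) with h | h
        · exact hup ⟨hA.1.trans hx.1, h⟩ ⟨l, le_rfl⟩ h
        · exact hdown ⟨le_rfl, u⟩ ⟨h, hx.2.trans hB.2⟩ h
  have haS : a ∈ Set.Icc a b \ {x₀} := ⟨Set.left_mem_Icc.2 hab.le, hx₀.1.ne⟩
  have hbS : b ∈ Set.Icc a b \ {x₀} := ⟨Set.right_mem_Icc.2 hab.le, hx₀.2.ne'⟩
  refine ⟨fun x hx _ => ⟨hlow x hx, hhigh x hx⟩, ?_, ?_⟩
  · refine IsLeast.csInf_eq ⟨?_, ?_⟩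
    · rcases min_choice (r a) (r b) with h | h
      · rw [h]; exact Set.mem_image_of_mem r haS
      · rw [h]; exact Set.mem_image_of_mem r hbS
    · rintro _ ⟨x, hx, rfl⟩
      exact hlow x hx.1
  · refine IsLUB.csSup_eq ⟨?_, ?_⟩ ⟨_, Set.mem_image_of_mem r haS⟩
    · rintro _ ⟨x, hx, rfl⟩
      exact hhigh x hx.1
    · intro M hM
      by_cases hcx : c = x₀
      · -- The peak is the removed point: approach it along `x ≠ x₀`.
        rw [hcx]
        have ht : Filter.Tendsto r (nhdsWithin x₀ {x₀}ᶜ) (nhds (r x₀)) :=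
          hcont.continuousAt.continuousWithinAt
        refine le_of_tendsto ht ?_
        filter_upwards [self_mem_nhdsWithin,
          nhdsWithin_le_nhds (Icc_mem_nhds hx₀.1 hx₀.2)] with t h1 h2
        exact hM (Set.mem_image_of_mem r ⟨h2, h1⟩)
      · exact hM (Set.mem_image_of_mem r ⟨hcm, hcx⟩)
end

section
/- Let k ≥ 1 be an integer, let f : ℝ → ℝ be real-analytic on ℝ and not a polynomial of degree ≤ k, let x₀ ∈ ℝ, and let ℓ ≥ 1 be the smallest positive integer such that f^{(k+ℓ)}(x₀) ≠ 0. Define, for ε > 0, W_Lagrange(ε) = (1/k!)·(sup_{y ∈ [x₀, x₀+ε]} f^{(k)}(y) − inf_{y ∈ [x₀, x₀+ε]} f^{(k)}(y)) and W*(ε) = sup_{x ∈ (x₀, x₀+ε]} R_{k-1}(x; f, x₀)/(x - x₀)^k − inf_{x ∈ (x₀, x₀+ε]} R_{k-1}(x; f, x₀)/(x - x₀)^k. Then lim_{ε → 0⁺} W_Lagrange(ε)/W*(ε) = (k + ℓ choose ℓ). -/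
open Filter Topology Set

/-- Two-term expansion of the Taylor remainder in Peano form: the terms of order strictly between
`k` and `k + ℓ` vanish. For `k = 0` the remainder is `f` itself. -/
lemma taylorRemainder_isLittleO (k ℓ : ℕ) (hℓ : 1 ≤ ℓ) (f : ℝ → ℝ) (x₀ : ℝ)
    (hf : ContDiff ℝ (k + ℓ : ℕ) f)
    (hmin : ∀ j : ℕ, 1 ≤ j → j < ℓ → iteratedDeriv (k + j) f x₀ = 0) :
    (fun x => taylorRemainder f x₀ k x - iteratedDeriv k f x₀ / k.factorial * (x - x₀) ^ k
      - iteratedDeriv (k + ℓ) f x₀ / (k + ℓ).factorial * (x - x₀) ^ (k + ℓ))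
      =o[𝓝 x₀] fun x => (x - x₀) ^ (k + ℓ) := by
  have h := taylor_isLittleO (f := f) (n := k + ℓ) convex_univ (mem_univ x₀) hf.contDiffOn
  rw [nhdsWithin_univ] at h
  refine h.congr_left fun x => ?_
  obtain ⟨m, rfl⟩ : ∃ m, ℓ = m + 1 := ⟨ℓ - 1, by omega⟩
  have hmid : ∑ j ∈ Finset.range m, ((k + (j + 1)).factorial : ℝ)⁻¹ * (x - x₀) ^ (k + (j + 1)) *
      iteratedDeriv (k + (j + 1)) f x₀ = 0 := by
    refine Finset.sum_eq_zero fun j hj => ?_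
    rw [hmin (j + 1) (by omega) (by have := Finset.mem_range.1 hj; omega), mul_zero]
  rw [taylor_within_apply, add_assoc k, Finset.sum_range_add, Finset.sum_range_succ,
    Finset.sum_range_succ']
  simp only [iteratedDerivWithin_univ, smul_eq_mul, taylorRemainder, hmid, add_zero]
  have : ∑ i ∈ Finset.range k, iteratedDeriv i f x₀ * (x - x₀) ^ i / (i.factorial : ℝ)
      = ∑ i ∈ Finset.range k, (i.factorial : ℝ)⁻¹ * (x - x₀) ^ i * iteratedDeriv i f x₀ :=
    Finset.sum_congr rfl fun i _ => by ring
  rw [this]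
  ring

/-- If `g = a + c (x - x₀)^ℓ + o((x - x₀)^ℓ)`, the width of the range of `g` over an interval from
`x₀` to `x₀ + ε`, with or without its left endpoint, is `(|c| + o(1)) ε^ℓ`. -/
lemma width_div_pow_tendsto (ℓ : ℕ) (hℓ : 1 ≤ ℓ) (g : ℝ → ℝ) (x₀ a c : ℝ) (S : ℝ → Set ℝ)
    (hS₁ : ∀ ε, Ioc x₀ (x₀ + ε) ⊆ S ε) (hS₂ : ∀ ε, S ε ⊆ Icc x₀ (x₀ + ε))
    (hg : ∀ δ > 0, ∀ᶠ ε in 𝓝[>] (0 : ℝ), ∀ x ∈ S ε,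
      |g x - a - c * (x - x₀) ^ ℓ| ≤ δ * (x - x₀) ^ ℓ) :
    Tendsto (fun ε => (sSup (g '' S ε) - sInf (g '' S ε)) / ε ^ ℓ) (𝓝[>] 0) (𝓝 |c|) := by
  rw [Metric.tendsto_nhds]
  intro δ hδ
  filter_upwards [hg (δ / 4) (by positivity), self_mem_nhdsWithin] with ε hε hpos
  have hpos : 0 < ε := hpos
  have hpow : 0 < ε ^ ℓ := by positivity
  have hp : ∀ x ∈ S ε, 0 ≤ (x - x₀) ^ ℓ ∧ (x - x₀) ^ ℓ ≤ ε ^ ℓ := fun x hx => by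
    have := hS₂ ε hx
    have h0 : 0 ≤ x - x₀ := by linarith [this.1]
    exact ⟨by positivity, pow_le_pow_left₀ h0 (by linarith [this.2]) _⟩
  have hup : ∀ u ∈ g '' S ε, ∀ v ∈ g '' S ε, dist u v ≤ (|c| + δ / 2) * ε ^ ℓ := by
    rintro _ ⟨x, hx, rfl⟩ _ ⟨y, hy, rfl⟩
    have hx' := hε x hx
    have hy' := hε y hy
    have h1 : |c * ((x - x₀) ^ ℓ - (y - x₀) ^ ℓ)| ≤ |c| * ε ^ ℓ := by
      rw [abs_mul]
      refine mul_le_mul_of_nonneg_left ?_ (abs_nonneg c)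
      rw [abs_le]
      constructor <;> linarith [(hp x hx).1, (hp y hy).1, (hp x hx).2, (hp y hy).2]
    have h2 := mul_le_mul_of_nonneg_left (hp x hx).2 (by positivity : 0 ≤ δ / 4)
    have h3 := mul_le_mul_of_nonneg_left (hp y hy).2 (by positivity : 0 ≤ δ / 4)
    rw [Real.dist_eq]
    rw [abs_le] at *
    constructor <;> linarith
  -- The width `sSup - sInf` of a bounded set of reals is its diameter, which treats both signs of
  -- `c` at once.
  have hbd : Bornology.IsBounded (g '' S ε) :=
    Metric.isBounded_iff.2 ⟨_, fun u hu v hv => hup u hu v hv⟩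
  rw [← Real.diam_eq hbd]
  have hle : Metric.diam (g '' S ε) ≤ (|c| + δ / 2) * ε ^ ℓ :=
    Metric.diam_le_of_forall_dist_le (by positivity) hup
  -- `g (x₀ + ε)` is compared with `g y` as `y → x₀⁺`, since `x₀` itself need not lie in `S ε`.
  have hge : (|c| - δ / 4) * ε ^ ℓ ≤ Metric.diam (g '' S ε) := by
    have hlim : Tendsto (fun y => (|c| - δ / 4) * ε ^ ℓ - (|c| + δ / 4) * (y - x₀) ^ ℓ) (𝓝[>] x₀)
        (𝓝 ((|c| - δ / 4) * ε ^ ℓ)) := by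
      have : Continuous fun y => (|c| - δ / 4) * ε ^ ℓ - (|c| + δ / 4) * (y - x₀) ^ ℓ := by fun_prop
      have h := (this.tendsto x₀).mono_left (nhdsWithin_le_nhds (s := Ioi x₀))
      simpa [zero_pow (by omega : ℓ ≠ 0)] using h
    refine le_of_tendsto hlim ?_
    filter_upwards [Ioc_mem_nhdsGT (by linarith : x₀ < x₀ + ε)] with y hy
    have hx := hS₁ ε (⟨by linarith, le_rfl⟩ : x₀ + ε ∈ Ioc x₀ (x₀ + ε))
    have hy := hS₁ ε hy
    have hd := Metric.dist_le_diam_of_mem hbd (mem_image_of_mem g hx) (mem_image_of_mem g hy)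
    have hx' := hε _ hx
    have hy' := hε y hy
    have h1 : |c * ε ^ ℓ| = |c| * ε ^ ℓ := by rw [abs_mul, abs_of_pos hpow]
    have h2 : |c * (y - x₀) ^ ℓ| = |c| * (y - x₀) ^ ℓ := by rw [abs_mul, abs_of_nonneg (hp y hy).1]
    rw [add_sub_cancel_left] at hx'
    rw [Real.dist_eq] at hd
    have t1 := abs_sub_abs_le_abs_sub (c * ε ^ ℓ) (c * (y - x₀) ^ ℓ)
    have t2 : |c * ε ^ ℓ - c * (y - x₀) ^ ℓ| ≤ |g (x₀ + ε) - g y| +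
        |g (x₀ + ε) - a - c * ε ^ ℓ| + |g y - a - c * (y - x₀) ^ ℓ| := by
      have e : c * ε ^ ℓ - c * (y - x₀) ^ ℓ = (g (x₀ + ε) - g y) - (g (x₀ + ε) - a - c * ε ^ ℓ)
        + (g y - a - c * (y - x₀) ^ ℓ) := by ring
      rw [e]
      exact (abs_add_le _ _).trans (add_le_add_left (abs_sub _ _) _)
    linarith
  rw [Real.dist_eq, abs_lt]
  have h1 : |c| - δ / 4 ≤ Metric.diam (g '' S ε) / ε ^ ℓ := by rwa [le_div_iff₀ hpow]
  have h2 : Metric.diam (g '' S ε) / ε ^ ℓ ≤ |c| + δ / 2 := by rwa [div_le_iff₀ hpow]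
  constructor <;> linarith

/-- A property valid near `x₀` holds throughout `[x₀, x₀ + ε]` for all small `ε > 0`. -/
lemma eventually_forall_Icc {x₀ : ℝ} {p : ℝ → Prop} (h : ∀ᶠ x in 𝓝 x₀, p x) :
    ∀ᶠ ε in 𝓝[>] (0 : ℝ), ∀ x ∈ Icc x₀ (x₀ + ε), p x := by
  obtain ⟨r, hr, h⟩ := Metric.eventually_nhds_iff.1 h
  filter_upwards [Ioo_mem_nhdsGT hr] with ε hε x hx
  apply h
  rw [Real.dist_eq, abs_lt]
  constructor <;> linarith [hx.1, hx.2, hε.2]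

/-- for analytic `f` that is not a polynomial of degree `≤ k`, with `ℓ` the
smallest positive integer such that `f⁽ᵏ⁺ˡ⁾(x₀) ≠ 0`, the ratio of the width of the classical
Lagrange-remainder enclosure interval to the width of the sharp enclosure interval over
`[x₀, x₀ + ε]` tends to `(k + ℓ).choose ℓ` as `ε → 0⁺`. -/
theorem lagrange_over_sharp_width_ratio_tendsto (k ℓ : ℕ) (hk : 1 ≤ k) (hℓ : 1 ≤ ℓ)
    (f : ℝ → ℝ) (x₀ : ℝ) (hf : ∀ x : ℝ, AnalyticAt ℝ f x)
    (hpoly : ¬ ∃ p : Polynomial ℝ, p.natDegree ≤ k ∧ ∀ x : ℝ, f x = p.eval x)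
    (hne : iteratedDeriv (k + ℓ) f x₀ ≠ 0)
    (hmin : ∀ j : ℕ, 1 ≤ j → j < ℓ → iteratedDeriv (k + j) f x₀ = 0) :
    Filter.Tendsto
      (fun ε : ℝ =>
        ((1 / (k.factorial : ℝ)) *
            (sSup (iteratedDeriv k f '' Set.Icc x₀ (x₀ + ε)) -
              sInf (iteratedDeriv k f '' Set.Icc x₀ (x₀ + ε)))) /
        (sSup ((fun x => taylorRemainder f x₀ k x / (x - x₀) ^ k) '' Set.Ioc x₀ (x₀ + ε)) -
          sInf ((fun x => taylorRemainder f x₀ k x / (x - x₀) ^ k) '' Set.Ioc x₀ (x₀ + ε))))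
      (nhdsWithin 0 (Set.Ioi 0)) (nhds ((k + ℓ).choose ℓ : ℝ)) := by
  have hcd : ∀ n : ℕ, ContDiff ℝ n f := fun n =>
    contDiff_iff_contDiffAt.2 fun x => (hf x).contDiffAt
  have hiter : ∀ j, iteratedDeriv j (iteratedDeriv k f) = iteratedDeriv (k + j) f := fun j => by
    simp only [iteratedDeriv_eq_iterate, add_comm k j, Function.iterate_add_apply]
  have hL : Tendsto (fun ε => (sSup (iteratedDeriv k f '' Icc x₀ (x₀ + ε)) -
      sInf (iteratedDeriv k f '' Icc x₀ (x₀ + ε))) / ε ^ ℓ) (𝓝[>] 0)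
      (𝓝 |iteratedDeriv (k + ℓ) f x₀ / ℓ.factorial|) := by
    refine width_div_pow_tendsto ℓ hℓ _ x₀ (iteratedDeriv k f x₀) _ (fun ε => Icc x₀ (x₀ + ε))
      (fun _ => Ioc_subset_Icc_self) (fun _ => subset_rfl) fun δ hδ => ?_
    have hg : ContDiff ℝ (0 + ℓ : ℕ) (iteratedDeriv k f) := by
      refine contDiff_iff_contDiffAt.2 fun x => ?_
      rw [iteratedDeriv_eq_iterate]
      exact ((hf x).iterated_deriv k).contDiffAt
    have h := taylorRemainder_isLittleO 0 ℓ hℓ (iteratedDeriv k f) x₀ hg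
      (fun j h1 h2 => by rw [hiter, zero_add]; exact hmin j h1 h2)
    filter_upwards [eventually_forall_Icc (h.def hδ)] with ε hε x hx
    have h0 : 0 ≤ x - x₀ := by linarith [hx.1]
    have := hε x hx
    simpa [taylorRemainder, hiter, abs_of_nonneg h0] using this
  have hR : Tendsto (fun ε =>
      (sSup ((fun x => taylorRemainder f x₀ k x / (x - x₀) ^ k) '' Ioc x₀ (x₀ + ε)) -
      sInf ((fun x => taylorRemainder f x₀ k x / (x - x₀) ^ k) '' Ioc x₀ (x₀ + ε))) / ε ^ ℓ)
      (𝓝[>] 0) (𝓝 |iteratedDeriv (k + ℓ) f x₀ / (k + ℓ).factorial|) := by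
    refine width_div_pow_tendsto ℓ hℓ _ x₀ (iteratedDeriv k f x₀ / k.factorial) _
      (fun ε => Ioc x₀ (x₀ + ε))
      (fun _ => subset_rfl) (fun _ => Ioc_subset_Icc_self) fun δ hδ => ?_
    have h := taylorRemainder_isLittleO k ℓ hℓ f x₀ (hcd _) hmin
    filter_upwards [eventually_forall_Icc (h.def hδ)] with ε hε x hx
    have h0 : 0 < x - x₀ := by linarith [hx.1]
    have hk0 : 0 < (x - x₀) ^ k := by positivity
    have := hε x (Ioc_subset_Icc_self hx)
    rw [Real.norm_eq_abs, Real.norm_eq_abs, abs_of_pos (by positivity : 0 < (x - x₀) ^ (k + ℓ)),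
      pow_add] at this
    -- Clear the division by `(x - x₀)^k`, so that the estimate becomes the expansion `h`.
    refine le_of_mul_le_mul_right ?_ hk0
    calc _ = |(taylorRemainder f x₀ k x / (x - x₀) ^ k - iteratedDeriv k f x₀ / k.factorial
          - iteratedDeriv (k + ℓ) f x₀ / (k + ℓ).factorial * (x - x₀) ^ ℓ) * (x - x₀) ^ k| := by
          rw [abs_mul, abs_of_pos hk0]
      _ ≤ δ * ((x - x₀) ^ k * (x - x₀) ^ ℓ) := by
          convert this using 2
          field_simp
      _ = _ := by ring
  have hlim := (hL.const_mul (1 / (k.factorial : ℝ))).div hR (by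
    rw [abs_ne_zero]
    exact div_ne_zero hne (by positivity))
  have hval : 1 / (k.factorial : ℝ) * |iteratedDeriv (k + ℓ) f x₀ / ℓ.factorial| /
      |iteratedDeriv (k + ℓ) f x₀ / (k + ℓ).factorial| = ((k + ℓ).choose ℓ : ℝ) := by
    have hD : |iteratedDeriv (k + ℓ) f x₀| ≠ 0 := abs_ne_zero.2 hne
    rw [← Nat.choose_symm_add, Nat.cast_add_choose, abs_div, abs_div, Nat.abs_cast, Nat.abs_cast]
    field_simp
  rw [hval] at hlim
  refine hlim.congr' ?_
  filter_upwards [self_mem_nhdsWithin] with ε hε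
  have hε : 0 < ε := hε
  rw [Pi.div_apply, ← mul_div_assoc]
  exact div_div_div_cancel_right₀ (by positivity) _ _
end

section
/- Let k ≥ 1 be an integer, let f : ℝ → ℝ be real-analytic on ℝ and not a polynomial of degree ≤ k, let x₀ ∈ ℝ, and let ℓ ≥ 1 be the smallest positive integer such that f^{(k+ℓ)}(x₀) ≠ 0. Then lim_{ε → 0⁺} (1/ε^ℓ)·(1/k!)·(sup_{y ∈ [x₀, x₀+ε]} f^{(k)}(y) − inf_{y ∈ [x₀, x₀+ε]} f^{(k)}(y)) = |f^{(k+ℓ)}(x₀)| / (k!·ℓ!). -/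
/-!
Put `g = f⁽ᵏ⁾`. The derivatives of `g` at `x₀` of orders `1, …, ℓ - 1` vanish, so Taylor's theorem
in Peano form gives `g y = g x₀ + c (y - x₀) ^ ℓ + o((y - x₀) ^ ℓ)` with `c = f⁽ᵏ⁺ˡ⁾(x₀) / ℓ!`
(`peano_expansion`). The width `sup g - inf g` over `[x₀, x₀ + ε]` is the diameter of the image of
that interval. Comparing the values at the two endpoints bounds it below by `(|c| - o(1)) ε ^ ℓ`.
As `(y - x₀) ^ ℓ` ranges over `[0, ε ^ ℓ]`, any two values of `g` differ by at most
`(|c| + o(1)) ε ^ ℓ` (`tendsto_width`). Dividing by `k!` gives the claim.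
-/

open Filter Topology Set in
/-- Peano form of Taylor's theorem when the intermediate derivatives vanish. -/
lemma peano_expansion {g : ℝ → ℝ} {x₀ : ℝ} {l : ℕ} (hl : 1 ≤ l) (hg : ContDiff ℝ l g)
    (hmin : ∀ j : ℕ, 1 ≤ j → j < l → iteratedDeriv j g x₀ = 0) :
    (fun y ↦ g y - g x₀ - iteratedDeriv l g x₀ / (l.factorial : ℝ) * (y - x₀) ^ l)
      =o[𝓝 x₀] fun y ↦ (y - x₀) ^ l := by
  refine (taylor_isLittleO_univ (x₀ := x₀) hg).congr_left fun y ↦ ?_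
  obtain ⟨m, rfl⟩ : ∃ m, l = m + 1 := ⟨l - 1, by omega⟩
  rw [taylor_within_apply, Finset.sum_range_succ, Finset.sum_range_succ']
  have h0 : ∑ i ∈ Finset.range m, (((i + 1).factorial : ℝ)⁻¹ * (y - x₀) ^ (i + 1)) •
      iteratedDerivWithin (i + 1) g univ x₀ = 0 := by
    refine Finset.sum_eq_zero fun i hi ↦ ?_
    rw [iteratedDerivWithin_univ, hmin (i + 1) (by omega) (by have := Finset.mem_range.1 hi; omega),
      smul_zero]
  rw [h0]
  simp only [iteratedDerivWithin_univ, iteratedDeriv_zero, smul_eq_mul, Nat.factorial_zero]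
  simp
  ring

open Filter Topology Set in
/-- The oscillation over `[x₀, x₀ + ε]` of a continuous function with leading behaviour
`c (y - x₀) ^ l` is `|c| ε ^ l + o(ε ^ l)`; it is computed as the diameter of the image. -/
lemma tendsto_width {g : ℝ → ℝ} {x₀ c : ℝ} {l : ℕ} (hg : Continuous g)
    (h : (fun y ↦ g y - g x₀ - c * (y - x₀) ^ l) =o[𝓝 x₀] fun y ↦ (y - x₀) ^ l) :
    Tendsto (fun ε : ℝ ↦ (1 / ε ^ l) * (sSup (g '' Icc x₀ (x₀ + ε)) - sInf (g '' Icc x₀ (x₀ + ε))))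
      (𝓝[>] 0) (𝓝 |c|) := by
  rw [Metric.tendsto_nhds]
  intro e he
  obtain ⟨δ, hδ, hball⟩ := Metric.eventually_nhds_iff.1 (h.def (show 0 < e / 3 by positivity))
  filter_upwards [Ioo_mem_nhdsGT hδ] with ε hε
  have hε0 : 0 < ε := hε.1
  have hεl : 0 < ε ^ l := by positivity
  have hbdd : Bornology.IsBounded (g '' Icc x₀ (x₀ + ε)) :=
    (isCompact_Icc.image hg).isBounded
  rw [← Real.diam_eq hbdd]
  have key : ∀ y ∈ Icc x₀ (x₀ + ε), |g y - g x₀ - c * (y - x₀) ^ l| ≤ e / 3 * (y - x₀) ^ l := by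
    intro y hy
    have hy0 : 0 ≤ y - x₀ := by linarith [hy.1]
    have := hball (y := y) (by
      rw [Real.dist_eq, abs_of_nonneg hy0]
      linarith [hy.2, hε.2])
    rwa [Real.norm_eq_abs, Real.norm_eq_abs, abs_of_nonneg (pow_nonneg hy0 l)] at this
  have hpow : ∀ y ∈ Icc x₀ (x₀ + ε), 0 ≤ (y - x₀) ^ l ∧ (y - x₀) ^ l ≤ ε ^ l := by
    intro y hy
    have hy0 : 0 ≤ y - x₀ := by linarith [hy.1]
    exact ⟨by positivity, pow_le_pow_left₀ hy0 (by linarith [hy.2]) l⟩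
  have upper : Metric.diam (g '' Icc x₀ (x₀ + ε)) ≤ (|c| + 2 * (e / 3)) * ε ^ l := by
    refine Metric.diam_le_of_forall_dist_le (by positivity) ?_
    rintro _ ⟨y, hy, rfl⟩ _ ⟨z, hz, rfl⟩
    have hcd : |c * ((y - x₀) ^ l - (z - x₀) ^ l)| ≤ |c| * ε ^ l := by
      rw [abs_mul]
      gcongr
      rw [abs_le]
      constructor <;> linarith [hpow y hy, hpow z hz]
    have ky : |g y - g x₀ - c * (y - x₀) ^ l| ≤ e / 3 * ε ^ l :=
      (key y hy).trans (mul_le_mul_of_nonneg_left (hpow y hy).2 (by positivity))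
    have kz : |g z - g x₀ - c * (z - x₀) ^ l| ≤ e / 3 * ε ^ l :=
      (key z hz).trans (mul_le_mul_of_nonneg_left (hpow z hz).2 (by positivity))
    rw [Real.dist_eq, abs_le]
    rw [abs_le] at hcd ky kz
    constructor <;> linarith
  have lower : (|c| - e / 3) * ε ^ l ≤ Metric.diam (g '' Icc x₀ (x₀ + ε)) := by
    have hmem : x₀ + ε ∈ Icc x₀ (x₀ + ε) := ⟨by linarith, le_rfl⟩
    refine le_trans ?_ (Metric.dist_le_diam_of_mem hbdd (mem_image_of_mem g hmem)
      (mem_image_of_mem g (left_mem_Icc.2 (by linarith))))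
    have k := key _ hmem
    rw [add_sub_cancel_left] at k
    have habs : |c * ε ^ l| = |c| * ε ^ l := by rw [abs_mul, abs_of_pos hεl]
    have := abs_sub_abs_le_abs_sub (c * ε ^ l) (g (x₀ + ε) - g x₀)
    rw [abs_sub_comm (c * ε ^ l), habs] at this
    rw [Real.dist_eq]
    linarith
  rw [Real.dist_eq, abs_lt, one_div_mul_eq_div]
  have h1 := (div_le_iff₀ hεl).2 upper
  have h2 := (le_div_iff₀ hεl).2 lower
  constructor <;> linarith


/-- for analytic `f` that is not a polynomial of degree `≤ k`, with `ℓ` the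
smallest positive integer such that `f⁽ᵏ⁺ˡ⁾(x₀) ≠ 0`, the width of the classical
Lagrange-remainder enclosure interval over `[x₀, x₀ + ε]`, divided by `ε^ℓ`, tends to
`|f⁽ᵏ⁺ˡ⁾(x₀)| / (k! ℓ!)` as `ε → 0⁺`. -/
theorem lagrange_width_asymptotics (k ℓ : ℕ) (hk : 1 ≤ k) (hℓ : 1 ≤ ℓ)
    (f : ℝ → ℝ) (x₀ : ℝ) (hf : ∀ x : ℝ, AnalyticAt ℝ f x)
    (hpoly : ¬ ∃ p : Polynomial ℝ, p.natDegree ≤ k ∧ ∀ x : ℝ, f x = p.eval x)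
    (hne : iteratedDeriv (k + ℓ) f x₀ ≠ 0)
    (hmin : ∀ j : ℕ, 1 ≤ j → j < ℓ → iteratedDeriv (k + j) f x₀ = 0) :
    Filter.Tendsto
      (fun ε : ℝ =>
        (1 / ε ^ ℓ) * ((1 / (k.factorial : ℝ)) *
          (sSup (iteratedDeriv k f '' Set.Icc x₀ (x₀ + ε)) -
            sInf (iteratedDeriv k f '' Set.Icc x₀ (x₀ + ε)))))
      (nhdsWithin 0 (Set.Ioi 0))
      (nhds (|iteratedDeriv (k + ℓ) f x₀| / ((k.factorial : ℝ) * (ℓ.factorial : ℝ)))) := by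
  have hsmooth : ContDiff ℝ ((ℓ + k : ℕ)) f :=
    (contDiff_omega_iff_analyticOnNhd.mpr fun x _ ↦ hf x).of_le le_top
  have hg : ContDiff ℝ ℓ (iteratedDeriv k f) := by
    rw [iteratedDeriv_eq_iterate]
    exact hsmooth.iterate_deriv' ℓ k
  have hadd : ∀ i : ℕ, iteratedDeriv i (iteratedDeriv k f) = iteratedDeriv (k + i) f := fun i ↦ by
    simp only [iteratedDeriv_eq_iterate, ← Function.iterate_add_apply, add_comm]
  have hexp := peano_expansion (x₀ := x₀) hℓ hg fun j hj hjl ↦ by rw [hadd, hmin j hj hjl]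
  have hlim := (tendsto_width hg.continuous hexp).const_mul (1 / (k.factorial : ℝ))
  rw [hadd, abs_div, Nat.abs_cast, one_div_mul_eq_div, div_div, mul_comm (ℓ.factorial : ℝ)] at hlim
  exact hlim.congr fun ε ↦ mul_left_comm _ _ _
end

section
/- Let k ≥ 1 be an integer, let f : ℝ → ℝ be real-analytic on ℝ and not a polynomial of degree ≤ k, let x₀ ∈ ℝ, and let ℓ ≥ 1 be the smallest positive integer such that f^{(k+ℓ)}(x₀) ≠ 0. Then, as ε → 0⁺, both the width (1/k!)·(sup_{y ∈ [x₀, x₀+ε]} f^{(k)}(y) − inf_{y ∈ [x₀, x₀+ε]} f^{(k)}(y)) and the width sup_{x ∈ (x₀, x₀+ε]} R_{k-1}(x; f, x₀)/(x - x₀)^k − inf_{x ∈ (x₀, x₀+ε]} R_{k-1}(x; f, x₀)/(x - x₀)^k are O(ε^ℓ); that is, there exist C > 0 and δ > 0 such that both quantities are at most C·ε^ℓ for all ε ∈ (0, δ). -/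
/-- Lagrange form of the remainder, divided by `(x - x₀)^k`. -/
lemma exists_taylorRemainder_div_pow_eq {f : ℝ → ℝ} {x₀ x : ℝ} {k : ℕ} (hk : 1 ≤ k)
    (hf : ContDiff ℝ k f) (hx : x₀ < x) :
    ∃ ξ ∈ Set.Ioo x₀ x,
      taylorRemainder f x₀ k x / (x - x₀) ^ k = iteratedDeriv k f ξ / (k.factorial : ℝ) := by
  obtain ⟨n, rfl⟩ : ∃ n, k = n + 1 := ⟨k - 1, by omega⟩
  obtain ⟨ξ, hξ, h⟩ := taylor_mean_remainder_lagrange_iteratedDeriv (n := n) hx.ne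
    (by exact_mod_cast hf.contDiffOn)
  rw [Set.uIoo_of_lt hx] at hξ
  refine ⟨ξ, hξ, ?_⟩
  have hR : taylorRemainder f x₀ (n + 1) x =
      f x - taylorWithinEval f n (Set.uIcc x₀ x) x₀ x := by
    rw [taylorRemainder, taylor_within_apply]
    congr 1
    refine Finset.sum_congr rfl fun i hi => ?_
    rw [iteratedDerivWithin_eq_iteratedDeriv (uniqueDiffOn_uIcc hx.ne) _ Set.left_mem_uIcc]
    · rw [smul_eq_mul]
      ring
    · exact hf.contDiffAt.of_le (by exact_mod_cast (Finset.mem_range.1 hi).le)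
  have hpos : (x - x₀) ^ (n + 1) ≠ 0 := pow_ne_zero _ (sub_pos.2 hx).ne'
  rw [hR, h]
  field_simp

/-- A `C^ℓ` function whose derivatives of orders `1, …, ℓ - 1` vanish at `x₀` is within
`O((y - x₀)^ℓ)` of its value at `x₀`, uniformly on `[x₀, x₀ + 1]`. -/
lemma exists_abs_sub_le_pow_of_iteratedDeriv_eq_zero {g : ℝ → ℝ} {x₀ : ℝ} {ℓ : ℕ} (hℓ : 1 ≤ ℓ)
    (hg : ContDiff ℝ ℓ g) (h0 : ∀ j, 1 ≤ j → j < ℓ → iteratedDeriv j g x₀ = 0) :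
    ∃ M > (0 : ℝ), ∀ y ∈ Set.Icc x₀ (x₀ + 1), |g y - g x₀| ≤ M * (y - x₀) ^ ℓ := by
  obtain ⟨B, hB⟩ := (isCompact_Icc (a := x₀) (b := x₀ + 1)).exists_bound_of_continuousOn
    (hg.continuous_iteratedDeriv ℓ le_rfl).continuousOn
  have hfac : (0 : ℝ) < ℓ.factorial := by exact_mod_cast ℓ.factorial_pos
  refine ⟨(|B| + 1) / ℓ.factorial, by positivity, fun y hy => ?_⟩
  rcases hy.1.eq_or_lt with rfl | hlt
  · simp [show ℓ ≠ 0 by omega]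
  obtain ⟨ξ, hξ, h⟩ := exists_taylorRemainder_div_pow_eq hℓ hg hlt
  have hR : taylorRemainder g x₀ ℓ y = g y - g x₀ := by
    rw [taylorRemainder, Finset.sum_eq_single_of_mem 0 (Finset.mem_range.2 hℓ)]
    · simp
    · intro j hj hj0
      rw [h0 j (by omega) (Finset.mem_range.1 hj)]
      simp
  have hpos : 0 < (y - x₀) ^ ℓ := pow_pos (sub_pos.2 hlt) _
  have hξB : |iteratedDeriv ℓ g ξ| ≤ |B| + 1 := by
    have := hB ξ ⟨hξ.1.le, hξ.2.le.trans hy.2⟩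
    rw [Real.norm_eq_abs] at this
    linarith [le_abs_self B]
  rw [hR, div_eq_iff hpos.ne'] at h
  rw [h, abs_mul, abs_div, abs_of_pos hfac, abs_of_pos hpos]
  gcongr

lemma sSup_sub_sInf_image_le {α : Type*} {φ : α → ℝ} {s : Set α} (hs : s.Nonempty) {c r : ℝ}
    (h : ∀ x ∈ s, |φ x - c| ≤ r) : sSup (φ '' s) - sInf (φ '' s) ≤ 2 * r := by
  have h1 : sSup (φ '' s) ≤ c + r := csSup_le (hs.image φ) <| by
    rintro _ ⟨x, hx, rfl⟩
    linarith [(abs_le.1 (h x hx)).2]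
  have h2 : c - r ≤ sInf (φ '' s) := le_csInf (hs.image φ) <| by
    rintro _ ⟨x, hx, rfl⟩
    linarith [(abs_le.1 (h x hx)).1]
  linarith

/-- for analytic `f` that is not a polynomial of degree `≤ k`, with `ℓ` the
smallest positive integer such that `f⁽ᵏ⁺ˡ⁾(x₀) ≠ 0`, both the width of the classical
Lagrange-remainder enclosure interval and the width of the sharp enclosure interval over
`[x₀, x₀ + ε]` are `O(ε^ℓ)` as `ε → 0⁺`. -/
theorem widths_are_O_eps_pow_ell (k ℓ : ℕ) (hk : 1 ≤ k) (hℓ : 1 ≤ ℓ)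
    (f : ℝ → ℝ) (x₀ : ℝ) (hf : ∀ x : ℝ, AnalyticAt ℝ f x)
    (hpoly : ¬ ∃ p : Polynomial ℝ, p.natDegree ≤ k ∧ ∀ x : ℝ, f x = p.eval x)
    (hne : iteratedDeriv (k + ℓ) f x₀ ≠ 0)
    (hmin : ∀ j : ℕ, 1 ≤ j → j < ℓ → iteratedDeriv (k + j) f x₀ = 0) :
    ∃ C > (0 : ℝ), ∃ δ > (0 : ℝ), ∀ ε ∈ Set.Ioo (0 : ℝ) δ,
      (1 / (k.factorial : ℝ)) *
          (sSup (iteratedDeriv k f '' Set.Icc x₀ (x₀ + ε)) -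
            sInf (iteratedDeriv k f '' Set.Icc x₀ (x₀ + ε))) ≤ C * ε ^ ℓ ∧
      sSup ((fun x => taylorRemainder f x₀ k x / (x - x₀) ^ k) '' Set.Ioc x₀ (x₀ + ε)) -
          sInf ((fun x => taylorRemainder f x₀ k x / (x - x₀) ^ k) '' Set.Ioc x₀ (x₀ + ε)) ≤
        C * ε ^ ℓ := by
  have hcd : ∀ n : ℕ, ContDiff ℝ n f := fun n =>
    contDiff_iff_contDiffAt.2 fun x => (hf x).contDiffAt
  have hcomp : ∀ j, iteratedDeriv j (iteratedDeriv k f) = iteratedDeriv (k + j) f := fun j => by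
    rw [iteratedDeriv_eq_iterate, iteratedDeriv_eq_iterate, iteratedDeriv_eq_iterate, add_comm,
      Function.iterate_add_apply]
  have hg : ContDiff ℝ ℓ (iteratedDeriv k f) := by
    rw [iteratedDeriv_eq_iterate]
    exact ContDiff.iterate_deriv' ℓ k (hcd (ℓ + k))
  obtain ⟨M, hM, hbound⟩ := exists_abs_sub_le_pow_of_iteratedDeriv_eq_zero (x₀ := x₀) hℓ hg
    fun j h1 h2 => by rw [hcomp]; exact hmin j h1 h2
  have hfac : (0 : ℝ) < k.factorial := by exact_mod_cast k.factorial_pos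
  refine ⟨2 * M / k.factorial, by positivity, 1, one_pos, fun ε hε => ?_⟩
  have hosc : ∀ y ∈ Set.Icc x₀ (x₀ + ε),
      |iteratedDeriv k f y - iteratedDeriv k f x₀| ≤ M * ε ^ ℓ := fun y hy => by
    refine (hbound y ⟨hy.1, by linarith [hy.2, hε.2]⟩).trans ?_
    have h1 : 0 ≤ y - x₀ := sub_nonneg.2 hy.1
    have h2 : y - x₀ ≤ ε := by linarith [hy.2]
    gcongr
  constructor
  · have h := sSup_sub_sInf_image_le (Set.nonempty_Icc.2 (by linarith [hε.1])) hosc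
    calc _ ≤ 1 / (k.factorial : ℝ) * (2 * (M * ε ^ ℓ)) := by gcongr
      _ = _ := by ring
  · have h := sSup_sub_sInf_image_le (s := Set.Ioc x₀ (x₀ + ε))
      (φ := fun x => taylorRemainder f x₀ k x / (x - x₀) ^ k)
      (c := iteratedDeriv k f x₀ / k.factorial) (r := M * ε ^ ℓ / k.factorial)
      (Set.nonempty_Ioc.2 (by linarith [hε.1])) fun x hx => by
        obtain ⟨ξ, hξ, h⟩ := exists_taylorRemainder_div_pow_eq hk (hcd k) hx.1
        simp only [h]
        rw [← sub_div, abs_div, abs_of_pos hfac]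
        gcongr
        exact hosc ξ ⟨hξ.1.le, hξ.2.le.trans hx.2⟩
    calc _ ≤ 2 * (M * ε ^ ℓ / k.factorial) := h
      _ = _ := by ring
end

section
/- Let k ≥ 1 be an integer, let f : ℝ → ℝ be real-analytic on ℝ, and suppose f^{(k)} is monotonically increasing on an interval [a, b] with b > a. Then for every x ∈ (a, b], f^{(k)}(a)/k! ≤ R_{k-1}(x; f, a)/(x - a)^k ≤ R_{k-1}(b; f, a)/(b - a)^k; consequently the infimum of R_{k-1}(x; f, a)/(x - a)^k over x ∈ (a, b] equals f^{(k)}(a)/k! and the supremum equals R_{k-1}(b; f, a)/(b - a)^k, so the degree k sharp Taylor polynomial enclosure of f at a over [a, b] is defined by the interval [f^{(k)}(a)/k!, R_{k-1}(b; f, a)/(b - a)^k]. -/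
/-- The remainder `taylorRemainder`, with unrestricted derivatives, agrees with the one
built from Mathlib's Taylor polynomial within `[a, x]`. -/
lemma taylorRemainder_eq_sub_taylorWithinEval {f : ℝ → ℝ} {a x : ℝ} {n : ℕ} (hax : a < x)
    (hf : ∀ m : ℕ, ContDiff ℝ m f) :
    taylorRemainder f a (n + 1) x = f x - taylorWithinEval f n (Set.uIcc a x) a x := by
  rw [taylor_within_apply, taylorRemainder]
  congr 1
  refine Finset.sum_congr rfl fun i _ => ?_
  rw [iteratedDerivWithin_eq_iteratedDeriv (uniqueDiffOn_uIcc hax.ne) (hf i).contDiffAt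
    Set.left_mem_uIcc, smul_eq_mul]
  ring

lemma taylorRatio_eq_integral {f : ℝ → ℝ} {a x : ℝ} {n : ℕ} (hax : a < x)
    (hf : ∀ m : ℕ, ContDiff ℝ m f) :
    taylorRemainder f a (n + 1) x / (x - a) ^ (n + 1) =
      ∫ t in (0 : ℝ)..1,
        (1 - t) ^ n / (n.factorial : ℝ) * iteratedDeriv (n + 1) f (a + (x - a) * t) := by
  have h0 : x - a ≠ 0 := (sub_pos.2 hax).ne'
  rw [taylorRemainder_eq_sub_taylorWithinEval hax hf,
    taylor_integral_remainder (hf (n + 1)).contDiffOn]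
  have h1 : ∫ t in a..x, ((x - t) ^ n / (n.factorial : ℝ)) •
        iteratedDerivWithin (n + 1) f (Set.uIcc a x) t =
      ∫ t in a..x, (x - t) ^ n / (n.factorial : ℝ) * iteratedDeriv (n + 1) f t := by
    refine intervalIntegral.integral_congr fun t ht => ?_
    simp only [smul_eq_mul]
    rw [iteratedDerivWithin_eq_iteratedDeriv (uniqueDiffOn_uIcc hax.ne) (hf _).contDiffAt ht]
  have h2 := intervalIntegral.mul_integral_comp_add_mul (a := 0) (b := 1) (c := x - a) (d := a)
    (f := fun t => (x - t) ^ n / (n.factorial : ℝ) * iteratedDeriv (n + 1) f t)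
  rw [mul_zero, add_zero, mul_one, add_sub_cancel] at h2
  rw [h1, ← h2, div_eq_iff (pow_ne_zero _ h0), pow_succ, ← mul_assoc, mul_comm (x - a)]
  congr 1
  rw [← intervalIntegral.integral_mul_const]
  refine intervalIntegral.integral_congr fun t _ => ?_
  rw [show x - (a + (x - a) * t) = (x - a) * (1 - t) by ring, mul_pow]
  ring

lemma taylorRatio_le_of_le {f : ℝ → ℝ} {a b x : ℝ} {n : ℕ} (hax : a < x) (hxb : x ≤ b)
    (hf : ∀ m : ℕ, ContDiff ℝ m f)
    (hmono : MonotoneOn (iteratedDeriv (n + 1) f) (Set.Icc a b)) :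
    taylorRemainder f a (n + 1) x / (x - a) ^ (n + 1) ≤
      taylorRemainder f a (n + 1) b / (b - a) ^ (n + 1) := by
  have hc : Continuous (iteratedDeriv (n + 1) f) :=
    (hf (n + 1)).continuous_iteratedDeriv _ le_rfl
  rw [taylorRatio_eq_integral hax hf, taylorRatio_eq_integral (hax.trans_le hxb) hf]
  refine intervalIntegral.integral_mono_on zero_le_one
    (Continuous.intervalIntegrable (by fun_prop) _ _)
    (Continuous.intervalIntegrable (by fun_prop) _ _) fun t ht => ?_
  have h1 : 0 ≤ 1 - t := sub_nonneg.2 ht.2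
  have hle : (x - a) * t ≤ (b - a) * t := by
    have := ht.1
    gcongr
  have hx0 : 0 ≤ (x - a) * t := mul_nonneg (sub_nonneg.2 hax.le) ht.1
  have hb1 : (b - a) * t ≤ b - a :=
    mul_le_of_le_one_right (sub_nonneg.2 (hax.le.trans hxb)) ht.2
  refine mul_le_mul_of_nonneg_left (hmono ⟨?_, ?_⟩ ⟨?_, ?_⟩ ?_) (by positivity) <;> linarith

lemma taylorRatio_mem_Icc {f : ℝ → ℝ} {a b x : ℝ} {n : ℕ} (hax : a < x) (hxb : x ≤ b)
    (hf : ∀ m : ℕ, ContDiff ℝ m f)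
    (hmono : MonotoneOn (iteratedDeriv (n + 1) f) (Set.Icc a b)) :
    taylorRemainder f a (n + 1) x / (x - a) ^ (n + 1) ∈
      Set.Icc (iteratedDeriv (n + 1) f a / ((n + 1).factorial : ℝ))
        (iteratedDeriv (n + 1) f x / ((n + 1).factorial : ℝ)) := by
  obtain ⟨c, hc, h⟩ := taylor_mean_remainder_lagrange_iteratedDeriv (n := n) hax.ne
    (by exact_mod_cast (hf (n + 1)).contDiffOn)
  rw [Set.uIoo_of_lt hax] at hc
  have hp : (x - a) ^ (n + 1) ≠ 0 := pow_ne_zero _ (sub_pos.2 hax).ne'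
  have heq : taylorRemainder f a (n + 1) x / (x - a) ^ (n + 1) =
      iteratedDeriv (n + 1) f c / ((n + 1).factorial : ℝ) := by
    rw [taylorRemainder_eq_sub_taylorWithinEval hax hf, h]
    field_simp
  have hcb : c ∈ Set.Icc a b := ⟨hc.1.le, hc.2.le.trans hxb⟩
  rw [heq]
  constructor
  · gcongr
    exact hmono ⟨le_rfl, hax.le.trans hxb⟩ hcb hc.1.le
  · gcongr
    exact hmono hcb ⟨hax.le, hxb⟩ hc.2.le


/-- for analytic `f` with `f⁽ᵏ⁾` monotonically increasing on `[a, b]` (`a < b`),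
the ratio `R_{k-1}(x; f, a)/(x - a)^k` lies in `[f⁽ᵏ⁾(a)/k!, R_{k-1}(b; f, a)/(b - a)^k]` for
all `x ∈ (a, b]`, and these two values are the infimum and supremum, i.e. the endpoints of the
sharp degree-`k` Taylor polynomial enclosure of `f` at `a` over `[a, b]`. -/
theorem sharp_enclosure_at_left_endpoint (k : ℕ) (hk : 1 ≤ k) (f : ℝ → ℝ) (a b : ℝ)
    (hab : a < b) (hf : ∀ x : ℝ, AnalyticAt ℝ f x)
    (hmono : MonotoneOn (iteratedDeriv k f) (Set.Icc a b)) :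
    (∀ x ∈ Set.Ioc a b,
        iteratedDeriv k f a / (k.factorial : ℝ) ≤ taylorRemainder f a k x / (x - a) ^ k ∧
        taylorRemainder f a k x / (x - a) ^ k ≤ taylorRemainder f a k b / (b - a) ^ k) ∧
    sInf ((fun x => taylorRemainder f a k x / (x - a) ^ k) '' Set.Ioc a b) =
      iteratedDeriv k f a / (k.factorial : ℝ) ∧
    sSup ((fun x => taylorRemainder f a k x / (x - a) ^ k) '' Set.Ioc a b) =
      taylorRemainder f a k b / (b - a) ^ k := by
  obtain ⟨n, rfl⟩ : ∃ n, k = n + 1 := ⟨k - 1, by omega⟩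
  have hf' : ∀ m : ℕ, ContDiff ℝ m f := fun m =>
    contDiff_iff_contDiffAt.2 fun x => (hf x).contDiffAt
  have hc : Continuous (iteratedDeriv (n + 1) f) :=
    (hf' (n + 1)).continuous_iteratedDeriv _ le_rfl
  refine ⟨fun x hx => ⟨(taylorRatio_mem_Icc hx.1 hx.2 hf' hmono).1,
    taylorRatio_le_of_le hx.1 hx.2 hf' hmono⟩, ?_, ?_⟩
  · refine IsGLB.csInf_eq ⟨?_, fun y hy => ?_⟩ ((Set.nonempty_Ioc.2 hab).image _)
    · rintro _ ⟨x, hx, rfl⟩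
      exact (taylorRatio_mem_Icc hx.1 hx.2 hf' hmono).1
    · have ht : Filter.Tendsto
          (fun x => iteratedDeriv (n + 1) f x / ((n + 1).factorial : ℝ))
          (nhdsWithin a (Set.Ioi a))
          (nhds (iteratedDeriv (n + 1) f a / ((n + 1).factorial : ℝ))) :=
        ((hc.div_const _).tendsto a).mono_left nhdsWithin_le_nhds
      -- Any lower bound `y` satisfies `y ≤ f⁽ᵏ⁾(x) / k!` for `x` near `a` on the right; let `x → a`.
      refine ge_of_tendsto ht ?_
      filter_upwards [Ioc_mem_nhdsGT hab] with x hx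
      exact (hy ⟨x, hx, rfl⟩).trans (taylorRatio_mem_Icc hx.1 hx.2 hf' hmono).2
  · refine IsGreatest.csSup_eq ⟨⟨b, ⟨hab, le_rfl⟩, rfl⟩, ?_⟩
    rintro _ ⟨x, hx, rfl⟩
    exact taylorRatio_le_of_le hx.1 hx.2 hf' hmono
end
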